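/- arXiv:2102.00480 — 3 statements merged into one kernel-verified Lean document; each statement's English description precedes it below -/
import Mathlib

section
/- In the orthogonal case: if n ≥ 3, or if n = 2 and det j ∉ -F^{×2}, then SX^j consists of exactly two SG^j(E)-orbits; and if n ≥ 3, or if n = 2 and det j ∉ -ı²·F^{×2}, then X^j \ SX^j consists of exactly two SG^j(E)-orbits. -/
open Matrix

namespace OrthPair

variable {E : Type} [Field E]

/-- `g ∈ G^j(E) = {g ∈ GL_n(E) : gᵀ j g = j}` (orthogonal case). -/
def Gj {n : ℕ} (j g : Matrix (Fin n) (Fin n) E) : Prop :=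
  IsUnit g ∧ gᵀ * j * g = j

/-- `x ∈ X^j = {x ∈ G^j(E) : x·σ(x) = 1}`. -/
def Xj {n : ℕ} (σ : E → E) (j x : Matrix (Fin n) (Fin n) E) : Prop :=
  Gj j x ∧ x * x.map σ = 1

/-- `x ∈ SX^j = X^j ∩ SL_n(E)`. -/
def SXj {n : ℕ} (σ : E → E) (j x : Matrix (Fin n) (Fin n) E) : Prop :=
  Xj σ j x ∧ x.det = 1

/-- `x'` lies in the `SG^j(E) = G^j(E) ∩ SL_n(E)`-orbit of `x` for twisted conjugation
`g·x = g x σ(g)⁻¹`. -/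
def orbSG {n : ℕ} (σ : E → E) (j x x' : Matrix (Fin n) (Fin n) E) : Prop :=
  ∃ g, Gj j g ∧ g.det = 1 ∧ x' = g * x * (g.map σ)⁻¹

end OrthPair

open OrthPair

/-!
By Hilbert 90 every `x ∈ X^j` is `h * σ(h)⁻¹` for some `h ∈ GL_n(E)`, and `hᵀ * j * h` is then a
symmetric matrix over `F`, well defined up to congruence over `F`. Two elements of `X^j` are in the
same `SG^j(E)`-orbit exactly when these forms are isometric, since a reflection corrects the
determinant of an isometry. The value `det x = ±1` fixes the discriminant `D` of the form:
`D = det j` for `det x = 1` and `D = ι² * det j` for `det x = -1`. Every form of such a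
discriminant occurs, because over `E` it becomes isometric to `j`: a form on `F^2` is a multiple of
a norm form, and every element of `F` is a norm of the required type over `E`; larger forms are
reduced to `F^2` by splitting off a common line.

It remains to count the forms of rank `m + 2` and discriminant `D`. For rank two these are the
multiples `c * (X² + D * Y²)`, up to norms from `F(√-D)`, so there are two of them as soon as `-D`
is not a square. Forms of higher rank split off a line spanned by a vector of a prescribed value
`c`, which reduces them to rank two by Witt cancellation.

The arithmetic input is that the norm group of a quadratic extension `L/F` has index two. Hilbert
90 for `L/F` gives `2 * [Lˣ : Lˣ²] * [Fˣ : N Lˣ] = [Fˣ : Fˣ²]²`, while counting points of balls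
gives `[Kˣ : Kˣ²] = 4 * [O_K : 2 O_K]`, and `[O_L : 2 O_L] = [O_F : 2 O_F]²`.
-/

namespace OrthPair

section Index

/-- The index of the subgroup of `n`-th powers in a commutative group; in additive notation,
the index of `n • A` in `A`. -/
@[to_additive]
noncomputable def powIndex (A : Type*) [CommGroup A] (n : ℕ) : ℕ :=
  (powMonoidHom n : A →* A).range.index

@[to_additive]
theorem powIndex_of_injective {A B : Type*} [CommGroup A] [CommGroup B] (n : ℕ)
    (j : B →* A) (hj : Function.Injective j) (hindex : j.range.index ≠ 0)
    (hB : Function.Injective (powMonoidHom n : B →* B)) :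
    powIndex A n = powIndex B n * Nat.card (powMonoidHom n : A →* A).ker := by
  rw [powIndex, powIndex]
  set f : A →* A := powMonoidHom n
  set g : B →* B := powMonoidHom n
  set W := j.range
  have hmap : W.map f = g.range.map j := by
    rw [MonoidHom.map_range, MonoidHom.map_range]
    exact congrArg _ (MonoidHom.ext fun b => (map_pow j b n).symm)
  have hdisj : W ⊓ f.ker = ⊥ := by
    rw [eq_bot_iff]
    rintro _ ⟨⟨b, rfl⟩, hb⟩
    have hpow : g b = g 1 := hj (by simpa [f, g] using hb)
    rw [hB hpow, map_one]
    exact Subgroup.mem_bot.2 rfl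
  have hinner : (W.map f).relIndex W = g.range.index := by
    rw [hmap, show W = (⊤ : Subgroup B).map j from MonoidHom.range_eq_map j,
      Subgroup.relIndex_map_map_of_injective _ _ hj, Subgroup.relIndex_top_right]
  have houter : (W.map f).relIndex f.range = (W ⊔ f.ker).index := by
    simpa [← MonoidHom.range_eq_map] using Subgroup.relIndex_map_map f W ⊤
  have hker : W.relIndex (W ⊔ f.ker) = Nat.card f.ker := by
    rw [Subgroup.relIndex_sup_left, ← Subgroup.inf_relIndex_right, hdisj,
      Subgroup.relIndex_bot_left]
  have hsup : Nat.card f.ker * (W ⊔ f.ker).index = W.index :=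
    hker ▸ Subgroup.relIndex_mul_index le_sup_left
  have hsup_ne : (W ⊔ f.ker).index ≠ 0 := right_ne_zero_of_mul (hsup ▸ hindex)
  have hle : W.map f ≤ W := hmap ▸ Subgroup.map_le_range j g.range
  refine mul_right_cancel₀ hsup_ne ?_
  calc f.range.index * (W ⊔ f.ker).index
      = (W.map f).index := by
        rw [mul_comm, ← houter, Subgroup.relIndex_mul_index (Subgroup.map_le_range f W)]
    _ = (W.map f).relIndex W * W.index := (Subgroup.relIndex_mul_index hle).symm
    _ = g.range.index * Nat.card f.ker * (W ⊔ f.ker).index := by rw [hinner, ← hsup, mul_assoc]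

theorem powIndex_prod (A B : Type*) [CommGroup A] [CommGroup B] (n : ℕ) :
    powIndex (A × B) n = powIndex A n * powIndex B n := by
  rw [powIndex, powIndex, powIndex, ← Subgroup.index_prod]
  congr 1
  ext x
  simp [Subgroup.mem_prod, Prod.ext_iff]

theorem nsmulIndex_pi (ι A : Type*) [Fintype ι] [AddCommGroup A] (n : ℕ) :
    nsmulIndex (ι → A) n = nsmulIndex A n ^ Fintype.card ι := by
  have hpi : (nsmulAddMonoidHom n : (ι → A) →+ ι → A).range =
      AddSubgroup.pi Set.univ fun _ => (nsmulAddMonoidHom n : A →+ A).range := by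
    ext x
    simp [AddSubgroup.mem_pi, funext_iff, Classical.skolem]
  rw [nsmulIndex, hpi, AddSubgroup.index_pi, Finset.prod_const, Finset.card_univ, nsmulIndex]

theorem powIndex_multiplicative_int (n : ℕ) : powIndex (Multiplicative ℤ) n = n := by
  have hrange : (powMonoidHom n : Multiplicative ℤ →* Multiplicative ℤ).range =
      (AddSubgroup.zmultiples (n : ℤ)).toSubgroup := by
    ext x
    refine Iff.trans ?_ (Int.mem_zmultiples_iff (a := n) (b := Multiplicative.toAdd x)).symm
    refine Multiplicative.toAdd.exists_congr fun y => ?_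
    rw [powMonoidHom_apply, ← Multiplicative.toAdd.injective.eq_iff, toAdd_pow, nsmul_eq_mul,
      eq_comm]
  rw [powIndex, hrange, AddSubgroup.index_toSubgroup, Int.index_zmultiples, Int.natAbs_natCast]

theorem card_ker_powMonoidHom_two {K : Type*} [Field K] (h2 : (2 : K) ≠ 0) :
    Nat.card (powMonoidHom 2 : Kˣ →* Kˣ).ker = 2 :=
  (IsPrimitiveRoot.neg_one (ringChar K) fun h => h2 (by
    simpa [h] using CharP.cast_eq_zero K (ringChar K))).card_rootsOfUnity

end Index

section Ultrametric

theorem exists_add_mul_self_eq {K : Type*} [NormedField K] [CompleteSpace K]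
    [IsUltrametricDist K] {c : K} (hc : ‖c‖ < 1) : ∃ z, z + z * z = c ∧ ‖z‖ ≤ ‖c‖ := by
  let f : ℕ → K := fun n => Nat.rec 0 (fun _ z => c - z * z) n
  have hf : ∀ n, f (n + 1) = c - f n * f n := fun n => rfl
  have hbound : ∀ n, ‖f n‖ ≤ ‖c‖ := by
    intro n
    induction n with
    | zero => simp [f]
    | succ n ih =>
      rw [hf, sub_eq_add_neg]
      refine (IsUltrametricDist.norm_add_le_max _ _).trans (max_le le_rfl ?_)
      rw [norm_neg, norm_mul]
      nlinarith [norm_nonneg (f n)]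
  have hdist : ∀ n, dist (f n) (f (n + 1)) ≤ 1 * ‖c‖ ^ n := by
    intro n
    induction n with
    | zero => simpa [f] using hc.le
    | succ n ih =>
      have hdiff : f (n + 1) - f (n + 1 + 1) = (f (n + 1) - f n) * (f (n + 1) + f n) := by
        rw [hf (n + 1)]
        nth_rewrite 1 [hf n]
        ring
      have hsum : ‖f (n + 1) + f n‖ ≤ ‖c‖ :=
        (IsUltrametricDist.norm_add_le_max _ _).trans (max_le (hbound (n + 1)) (hbound n))
      rw [dist_eq_norm] at ih ⊢
      rw [hdiff, norm_mul, norm_sub_rev, pow_succ, ← mul_assoc]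
      exact mul_le_mul ih hsum (norm_nonneg _) (by positivity)
  obtain ⟨z, hz⟩ := cauchySeq_tendsto_of_complete (cauchySeq_of_le_geometric _ _ hc hdist)
  refine ⟨z, ?_, le_of_tendsto hz.norm (Filter.Eventually.of_forall hbound)⟩
  have hlim : z = c - z * z := tendsto_nhds_unique ((Filter.tendsto_add_atTop_iff_nat 1).2 hz)
    (tendsto_const_nhds.sub (hz.mul hz))
  linear_combination hlim

variable {K : Type*} [NormedField K] [IsUltrametricDist K]

theorem norm_eq_one_of_norm_sub_one_lt {u : K} (hu : ‖u - 1‖ < 1) : ‖u‖ = 1 := by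
  have h := IsUltrametricDist.norm_add_eq_max_of_norm_ne_norm (x := u - 1) (y := 1)
    (by rw [norm_one]; exact hu.ne)
  rwa [sub_add_cancel, norm_one, max_eq_right hu.le] at h

theorem norm_two_le_one : ‖(2 : K)‖ ≤ 1 := by
  simpa using IsUltrametricDist.norm_natCast_le_one K 2

/-- The ring of integers of an ultrametric normed field. -/
noncomputable abbrev integerRing (K : Type*) [NormedField K] [IsUltrametricDist K] : Subring K :=
  (NormedField.valuation (K := K)).integer

theorem mem_integer_iff {x : K} : x ∈ integerRing K ↔ ‖x‖ ≤ 1 := by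
  rw [Valuation.mem_integer_iff, NormedField.valuation_apply]; rfl

/-- The higher unit group `{u | ‖u‖ = 1 ∧ u ≡ 1 mod c}`. -/
def higherUnits (c : K) : Subgroup Kˣ where
  carrier := {u | ‖(u : K)‖ = 1 ∧ ‖(u : K) - 1‖ ≤ ‖c‖}
  one_mem' := by simp
  mul_mem' := by
    rintro u v ⟨hu, hu'⟩ ⟨hv, hv'⟩
    refine ⟨by simp [hu, hv], ?_⟩
    have huv : ((u * v : Kˣ) : K) - 1 = (u - 1) * v + (v - 1) := by push_cast; ring
    rw [huv]
    exact (IsUltrametricDist.norm_add_le_max _ _).trans (max_le (by simpa [hv] using hu') hv')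
  inv_mem' := by
    rintro u ⟨hu, hu'⟩
    refine ⟨by simp [hu], ?_⟩
    have hinv : ((u⁻¹ : Kˣ) : K) - 1 = -((u - 1) * (u : K)⁻¹) := by
      have := u.ne_zero
      push_cast
      field_simp
      ring
    rw [hinv, norm_neg, norm_mul, norm_inv, hu, inv_one, mul_one]
    exact hu'

theorem mem_higherUnits {c : K} {u : Kˣ} :
    u ∈ higherUnits c ↔ ‖(u : K)‖ = 1 ∧ ‖(u : K) - 1‖ ≤ ‖c‖ := Iff.rfl

theorem exists_mem_higherUnits {c x : K} (hc : ‖c‖ < 1) (hx : ‖x - 1‖ ≤ ‖c‖) :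
    ∃ u ∈ higherUnits c, (u : K) = x := by
  have hnorm := norm_eq_one_of_norm_sub_one_lt (hx.trans_lt hc)
  exact ⟨Units.mk0 x (norm_ne_zero_iff.1 (hnorm ▸ one_ne_zero)), ⟨hnorm, hx⟩, rfl⟩

theorem mem_range_nsmulAddMonoidHom_iff {n : ℕ} (hn : (n : K) ≠ 0) {x : integerRing K} :
    x ∈ (nsmulAddMonoidHom n : integerRing K →+ integerRing K).range ↔ ‖(x : K)‖ ≤ ‖(n : K)‖ := by
  constructor
  · rintro ⟨y, rfl⟩
    have hy : ‖(y : K)‖ ≤ 1 := mem_integer_iff.1 y.2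
    rw [nsmulAddMonoidHom_apply, AddSubmonoidClass.coe_nsmul, nsmul_eq_mul, norm_mul]
    exact mul_le_of_le_one_right (norm_nonneg _) hy
  · intro hx
    have hy : (x : K) / n ∈ integerRing K :=
      mem_integer_iff.2 (by rw [norm_div]; exact div_le_one_of_le₀ hx (norm_nonneg _))
    refine ⟨⟨_, hy⟩, Subtype.ext ?_⟩
    rw [nsmulAddMonoidHom_apply, AddSubmonoidClass.coe_nsmul, nsmul_eq_mul, mul_div_cancel₀ _ hn]

theorem nsmulAddMonoidHom_integerRing_injective {n : ℕ} (hn : (n : K) ≠ 0) :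
    Function.Injective (nsmulAddMonoidHom n : integerRing K →+ integerRing K) := by
  intro x y hxy
  refine Subtype.ext (mul_left_cancel₀ hn ?_)
  simpa using congrArg Subtype.val hxy

theorem div_sub_one_mem_integer {c : K} (u : higherUnits c) :
    (((u : Kˣ) : K) - 1) / c ∈ integerRing K :=
  mem_integer_iff.2 (by rw [norm_div]; exact div_le_one_of_le₀ u.2.2 (norm_nonneg _))

/-- The homomorphism `1 + c x ↦ x` from the units congruent to `1` modulo `c` to `𝒪 / n𝒪`. -/
noncomputable def leadingTerm {n : ℕ} (hn : (n : K) ≠ 0) {c : K} (hc : ‖c‖ ≤ ‖(n : K)‖) :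
    higherUnits c →* Multiplicative
      (integerRing K ⧸ (nsmulAddMonoidHom n : integerRing K →+ integerRing K).range) where
  toFun u := Multiplicative.ofAdd (QuotientAddGroup.mk ⟨_, div_sub_one_mem_integer u⟩)
  map_one' := by
    rw [ofAdd_eq_one, QuotientAddGroup.eq_zero_iff]
    exact (mem_range_nsmulAddMonoidHom_iff hn).2 (by simp)
  map_mul' u v := by
    rw [← ofAdd_add, ← QuotientAddGroup.mk_add, Multiplicative.ofAdd.apply_eq_iff_eq, eq_comm,
      QuotientAddGroup.eq, mem_range_nsmulAddMonoidHom_iff hn]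
    have huv : -((((u : Kˣ) : K) - 1) / c + (((v : Kˣ) : K) - 1) / c) +
        (((u * v : higherUnits c) : Kˣ) - 1) / c =
        ((((u : Kˣ) : K) - 1) / c) * (((v : Kˣ) : K) - 1) := by
      push_cast
      ring
    simp only [AddMemClass.coe_add, NegMemClass.coe_neg]
    rw [huv, norm_mul]
    exact (mul_le_of_le_one_left (norm_nonneg _)
      (mem_integer_iff.1 (div_sub_one_mem_integer u))).trans (v.2.2.trans hc)

theorem leadingTerm_surjective {n : ℕ} (hn : (n : K) ≠ 0) {c : K} (hc : ‖c‖ ≤ ‖(n : K)‖)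
    (hc0 : c ≠ 0) (hc1 : ‖c‖ < 1) : Function.Surjective (leadingTerm hn hc) := by
  intro t
  obtain ⟨x, hx⟩ := QuotientAddGroup.mk_surjective (Multiplicative.toAdd t)
  obtain ⟨u, hu, hux⟩ := exists_mem_higherUnits (c := c) (x := 1 + c * x) hc1 (by
    rw [add_sub_cancel_left, norm_mul]
    exact mul_le_of_le_one_right (norm_nonneg _) (mem_integer_iff.1 x.2))
  refine ⟨⟨u, hu⟩, Multiplicative.toAdd.injective (Eq.trans ?_ hx)⟩
  refine congrArg QuotientAddGroup.mk (Subtype.ext ?_)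
  change ((u : K) - 1) / c = x
  rw [hux, add_sub_cancel_left, mul_div_cancel_left₀ _ hc0]

theorem leadingTerm_ker {n : ℕ} (hn : (n : K) ≠ 0) {c : K} (hc : ‖c‖ ≤ ‖(n : K)‖) (hc0 : c ≠ 0) :
    (leadingTerm hn hc).ker = (higherUnits (n * c)).subgroupOf (higherUnits c) := by
  ext u
  rw [MonoidHom.mem_ker, Subgroup.mem_subgroupOf, mem_higherUnits, and_iff_right u.2.1]
  refine (QuotientAddGroup.eq_zero_iff _).trans ((mem_range_nsmulAddMonoidHom_iff hn).trans ?_)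
  rw [norm_div, div_le_iff₀ (norm_pos_iff.2 hc0), norm_mul]

theorem sq_mem_higherUnits {c : K} (hc : ‖c‖ ≤ ‖(2 : K)‖) {u : Kˣ} (hu : u ∈ higherUnits c) :
    u ^ 2 ∈ higherUnits (2 * c) := by
  refine mem_higherUnits.2 ⟨by simp [hu.1], ?_⟩
  have hsq : ((u ^ 2 : Kˣ) : K) - 1 = ((u : K) - 1 + 2) * ((u : K) - 1) := by
    push_cast
    ring
  rw [hsq, norm_mul, norm_mul]
  exact mul_le_mul ((IsUltrametricDist.norm_add_le_max _ _).trans (max_le (hu.2.trans hc) le_rfl))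
    hu.2 (norm_nonneg _) (norm_nonneg _)

theorem exists_sq_eq_of_mem_higherUnits [CompleteSpace K] {c : K} (hc : ‖c‖ < ‖(2 : K)‖) {u : Kˣ}
    (hu : u ∈ higherUnits (2 * c)) : ∃ v ∈ higherUnits c, v ^ 2 = u := by
  have h2 : 0 < ‖(2 : K)‖ := (norm_nonneg c).trans_lt hc
  have h2' : (2 : K) ≠ 0 := norm_pos_iff.1 h2
  -- `u = (1 + 2 z) ^ 2` amounts to `z + z * z = (u - 1) / 4`.
  have hquot : ‖((u : K) - 1) / (2 * 2)‖ ≤ ‖c‖ / ‖(2 : K)‖ := by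
    rw [norm_div, norm_mul, div_le_div_iff₀ (by positivity) h2]
    have := mul_le_mul_of_nonneg_right hu.2 h2.le
    rw [norm_mul] at this
    linarith
  obtain ⟨z, hz, hzn⟩ := exists_add_mul_self_eq (hquot.trans_lt ((div_lt_one h2).2 hc))
  have hz2 : ‖1 + 2 * z - 1‖ ≤ ‖c‖ := by
    rw [add_sub_cancel_left, norm_mul, mul_comm]
    exact (le_div_iff₀ h2).1 (hzn.trans hquot)
  obtain ⟨v, hv, hvz⟩ := exists_mem_higherUnits (hc.trans_le norm_two_le_one) hz2
  refine ⟨v, hv, Units.ext ?_⟩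
  rw [Units.val_pow_eq_pow_val, hvz]
  rw [eq_div_iff (mul_ne_zero h2' h2')] at hz
  linear_combination hz

theorem powIndex_two_higherUnits [CompleteSpace K] {c : K} (hc0 : c ≠ 0) (hc : ‖c‖ < ‖(2 : K)‖) :
    powIndex (higherUnits c) 2 = nsmulIndex (integerRing K) 2 := by
  rw [← Nat.cast_ofNat] at hc
  have h2 : ((2 : ℕ) : K) ≠ 0 := norm_pos_iff.1 ((norm_nonneg c).trans_lt hc)
  have hrange : (powMonoidHom 2 : higherUnits c →* higherUnits c).range =
      (leadingTerm h2 hc.le).ker := by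
    rw [leadingTerm_ker h2 hc.le hc0]
    ext u
    constructor
    · rintro ⟨v, rfl⟩
      exact sq_mem_higherUnits (by simpa using hc.le) v.2
    · intro hu
      obtain ⟨v, hv, hvu⟩ := exists_sq_eq_of_mem_higherUnits (by simpa using hc) hu
      exact ⟨⟨v, hv⟩, Subtype.ext hvu⟩
  have hsurj := leadingTerm_surjective h2 hc.le hc0
    (hc.trans_le (IsUltrametricDist.norm_natCast_le_one K 2))
  rw [powIndex, hrange, Subgroup.index_ker, MonoidHom.range_eq_top.2 hsurj, Subgroup.card_top,
    nsmulIndex, AddSubgroup.index]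
  exact Nat.card_congr Multiplicative.toAdd

/-- The homomorphism `(m, u) ↦ π ^ m * u`. -/
def zpowMul (π : Kˣ) (c : K) : Multiplicative ℤ × higherUnits c →* Kˣ :=
  (zpowersHom Kˣ π).coprod (higherUnits c).subtype

theorem zpowMul_apply (π : Kˣ) (c : K) (x : Multiplicative ℤ × higherUnits c) :
    zpowMul π c x = π ^ Multiplicative.toAdd x.1 * x.2 := rfl

theorem zpowMul_injective {π : Kˣ} (hπ : ‖(π : K)‖ < 1) (c : K) :
    Function.Injective (zpowMul π c) := by
  rw [injective_iff_map_eq_one]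
  rintro ⟨m, u⟩ h
  have hnorm : ‖(π : K)‖ ^ Multiplicative.toAdd m = 1 := by
    simpa [zpowMul_apply, u.2.1] using congrArg (fun x : Kˣ => ‖(x : K)‖) h
  obtain rfl : m = 1 := (zpow_eq_one_iff_right₀ (norm_nonneg _) hπ.ne).1 hnorm
  simpa [zpowMul_apply] using h

theorem sq_injective_higherUnits {c : K} (hc : ‖c‖ < ‖(2 : K)‖) :
    Function.Injective (powMonoidHom 2 : higherUnits c →* higherUnits c) := by
  rw [injective_iff_map_eq_one]
  intro u hu
  have hsq : ((u : Kˣ) : K) ^ 2 = 1 := congrArg (fun v : higherUnits c => ((v : Kˣ) : K)) hu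
  rcases sq_eq_one_iff.1 hsq with h | h
  · exact Subtype.ext (Units.ext h)
  · have hlt := u.2.2.trans_lt hc
    rw [h, ← norm_neg] at hlt
    norm_num at hlt

theorem isOpen_higherUnits {c : K} (hc : c ≠ 0) : IsOpen (higherUnits c : Set Kˣ) := by
  refine Subgroup.isOpen_of_mem_nhds _ (g := 1) ?_
  have hball : Metric.closedBall (1 : K) ‖c‖ ∩ Metric.ball 1 1 ∈ nhds ((1 : Kˣ) : K) :=
    Filter.inter_mem (Metric.closedBall_mem_nhds _ (norm_pos_iff.2 hc))
      (Metric.ball_mem_nhds _ one_pos)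
  refine Filter.mem_of_superset (Units.continuous_val.continuousAt hball) fun u hu => ?_
  exact ⟨norm_eq_one_of_norm_sub_one_lt (mem_ball_iff_norm.1 hu.2), mem_closedBall_iff_norm.1 hu.1⟩

theorem isOpen_range_zpowMul (π : Kˣ) {c : K} (hc : c ≠ 0) :
    IsOpen ((zpowMul π c).range : Set Kˣ) :=
  Subgroup.isOpen_mono (fun u hu => ⟨(1, ⟨u, hu⟩), by simp [zpowMul_apply]⟩) (isOpen_higherUnits hc)

end Ultrametric

section LocalField

theorem isCompact_setOf_units_norm_mem_Icc {K : Type*} [NormedField K] [ProperSpace K] {r : ℝ}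
    (hr : 0 < r) (s : ℝ) : IsCompact {u : Kˣ | ‖(u : K)‖ ∈ Set.Icc r s} := by
  refine (Units.isEmbedding_val₀.isInducing.isCompact_preimage_iff
    (K := {x : K | ‖x‖ ∈ Set.Icc r s}) fun x hx => ?_).2 ?_
  · exact ⟨Units.mk0 x (norm_pos_iff.1 (hr.trans_le hx.1)), rfl⟩
  · exact (isCompact_closedBall (0 : K) s).of_isClosed_subset
      (isClosed_Icc.preimage continuous_norm) fun x hx => mem_closedBall_zero_iff.2 hx.2

variable {K : Type*} [NontriviallyNormedField K] [IsUltrametricDist K] [ProperSpace K]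

theorem index_range_zpowMul_ne_zero {π : Kˣ} (hπ : ‖(π : K)‖ < 1) {c : K} (hc : c ≠ 0) :
    (zpowMul π c).range.index ≠ 0 := by
  have := QuotientGroup.discreteTopology (isOpen_range_zpowMul π hc)
  have hπ0 : 0 < ‖(π : K)‖ := norm_pos_iff.2 π.ne_zero
  have hfinite := ((isCompact_setOf_units_norm_mem_Icc hπ0 1).image
    (QuotientGroup.continuous_mk (N := (zpowMul π c).range))).finite_of_discrete
  suffices Finite (Kˣ ⧸ (zpowMul π c).range) from
    Subgroup.finiteIndex_of_finite_quotient.index_ne_zero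
  refine Set.finite_univ_iff.1 (hfinite.subset fun q _ => ?_)
  obtain ⟨u, rfl⟩ := QuotientGroup.mk_surjective q
  obtain ⟨m, hlt, hle⟩ := exists_mem_Ioc_zpow (norm_pos_iff.2 u.ne_zero) ((one_lt_inv₀ hπ0).2 hπ)
  have hnorm : ‖((u * π ^ (m + 1) : Kˣ) : K)‖ = ‖(u : K)‖ * ‖(π : K)‖ ^ (m + 1) := by
    rw [Units.val_mul, norm_mul, Units.val_zpow_eq_zpow_val, norm_zpow]
  have hpos := zpow_pos hπ0 (m + 1)
  refine ⟨u * π ^ (m + 1), ⟨?_, ?_⟩, ?_⟩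
  · rw [hnorm]
    rw [_root_.inv_zpow, inv_lt_iff_one_lt_mul₀ (zpow_pos hπ0 m)] at hlt
    rw [zpow_add_one₀ hπ0.ne', ← mul_assoc]
    nlinarith
  · rwa [hnorm, ← le_div_iff₀ hpos, one_div, ← _root_.inv_zpow]
  · exact QuotientGroup.mk_mul_of_mem _ ⟨(Multiplicative.ofAdd (m + 1), 1), by simp [zpowMul_apply]⟩

theorem powIndex_two_units (h2 : (2 : K) ≠ 0) :
    powIndex Kˣ 2 = 4 * nsmulIndex (integerRing K) 2 := by
  obtain ⟨c, hc0', hc⟩ := NormedField.exists_norm_lt K (norm_pos_iff.2 h2)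
  have hc0 := norm_pos_iff.1 hc0'
  obtain ⟨b, hb0, hb1⟩ := NormedField.exists_norm_lt_one K
  let π : Kˣ := Units.mk0 b (norm_pos_iff.1 hb0)
  have hinj : Function.Injective
      (powMonoidHom 2 : Multiplicative ℤ × higherUnits c →* Multiplicative ℤ × higherUnits c) := by
    rintro ⟨m, u⟩ ⟨m', u'⟩ h
    refine Prod.ext ?_ (sq_injective_higherUnits hc (Prod.ext_iff.1 h).2)
    exact pow_left_injective two_ne_zero (Prod.ext_iff.1 h).1
  rw [powIndex_of_injective 2 (zpowMul π c) (zpowMul_injective hb1 c)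
    (index_range_zpowMul_ne_zero hb1 hc0) hinj, powIndex_prod, powIndex_multiplicative_int,
    powIndex_two_higherUnits hc0 hc, card_ker_powMonoidHom_two h2]
  ring

theorem exists_linearEquiv_norm_le_one (K L : Type*) [NontriviallyNormedField K] [CompleteSpace K]
    [NormedField L] [NormedAlgebra K L] [FiniteDimensional K L] :
    ∃ g : (Fin (Module.finrank K L) → K) ≃L[K] L, ∀ x, ‖x‖ ≤ 1 → ‖g x‖ ≤ 1 := by
  let f := (Module.finBasis K L).equivFun.symm.toContinuousLinearEquiv
  set M := ‖(f : (Fin (Module.finrank K L) → K) →L[K] L)‖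
  have hM : 0 < M + 1 := by positivity
  obtain ⟨c, hc0, hc⟩ := NormedField.exists_norm_lt K (inv_pos.2 hM)
  refine ⟨(LinearEquiv.smulOfNeZero K _ c (norm_pos_iff.1 hc0) ≪≫ₗ
    f.toLinearEquiv).toContinuousLinearEquiv, fun x hx => ?_⟩
  calc ‖f (c • x)‖ ≤ M * ‖c • x‖ := (f : (Fin (Module.finrank K L) → K) →L[K] L).le_opNorm _
    _ ≤ (M + 1) * (M + 1)⁻¹ := by
        rw [norm_smul]
        gcongr
        · linarith
        · exact (mul_le_of_le_one_right hc0.le hx).trans hc.le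
    _ = 1 := mul_inv_cancel₀ hM.ne'

theorem index_ne_zero_of_mem_nhds {A : Type*} [AddGroup A] [TopologicalSpace A]
    [SeparatelyContinuousAdd A] [CompactSpace A] (B : AddSubgroup A) {a : A}
    (hB : (B : Set A) ∈ nhds a) : B.index ≠ 0 := by
  have := AddSubgroup.quotient_finite_of_isOpen B (AddSubgroup.isOpen_of_mem_nhds _ hB)
  exact AddSubgroup.finiteIndex_of_finite_quotient.index_ne_zero

theorem coe_integerRing (K : Type*) [NormedField K] [IsUltrametricDist K] :
    (integerRing K : Set K) = Metric.closedBall 0 1 := by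
  ext x
  rw [SetLike.mem_coe, mem_integer_iff, mem_closedBall_zero_iff]

instance (K : Type*) [NormedField K] [IsUltrametricDist K] [ProperSpace K] :
    CompactSpace (integerRing K) :=
  isCompact_iff_compactSpace.1 (coe_integerRing K ▸ isCompact_closedBall 0 1)

theorem nsmulIndex_integerRing_ne_zero {n : ℕ} (hn : (n : K) ≠ 0) :
    nsmulIndex (integerRing K) n ≠ 0 := by
  refine index_ne_zero_of_mem_nhds _ (a := 0) (Filter.mem_of_superset
    (continuous_subtype_val.continuousAt (Metric.closedBall_mem_nhds 0 (norm_pos_iff.2 hn)))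
    fun x hx => ?_)
  exact (mem_range_nsmulAddMonoidHom_iff hn).2 (mem_closedBall_zero_iff.1 hx)

/-- The `𝒪_K`-linear map `𝒪_K^d → 𝒪_L` induced by a linear map `K^d → L` that does not increase
norms. -/
def integerRingMap {K L ι : Type*} [NormedField K] [IsUltrametricDist K]
    [NormedField L] [IsUltrametricDist L] [NormedAlgebra K L] [Fintype ι]
    (g : (ι → K) →ₗ[K] L) (hg : ∀ x, ‖x‖ ≤ 1 → ‖g x‖ ≤ 1) :
    (ι → integerRing K) →+ integerRing L where
  toFun x := ⟨g fun i => x i, mem_integer_iff.2 (hg _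
    ((pi_norm_le_iff_of_nonneg zero_le_one).2 fun i => mem_integer_iff.1 (x i).2))⟩
  map_zero' := Subtype.ext (map_zero g)
  map_add' _ _ := Subtype.ext (map_add g _ _)

theorem range_integerRingMap_mem_nhds {K L ι : Type*} [NormedField K] [IsUltrametricDist K]
    [NormedField L] [IsUltrametricDist L] [NormedAlgebra K L] [Fintype ι]
    (g : (ι → K) ≃L[K] L) (hg : ∀ x, ‖x‖ ≤ 1 → ‖g x‖ ≤ 1) :
    ((integerRingMap g.toLinearMap hg).range : Set (integerRing L)) ∈ nhds 0 := by
  have hball := Metric.closedBall_mem_nhds (0 : ι → K) one_pos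
  rw [← map_zero g.symm] at hball
  refine Filter.mem_of_superset
    ((g.symm.continuous.comp continuous_subtype_val).continuousAt hball) fun y hy => ?_
  rw [Set.mem_preimage, Function.comp_apply, map_zero, mem_closedBall_zero_iff,
    pi_norm_le_iff_of_nonneg zero_le_one] at hy
  exact ⟨fun i => ⟨_, mem_integer_iff.2 (hy i)⟩, Subtype.ext (g.apply_symm_apply _)⟩

theorem nsmulIndex_integerRing {L : Type*} [NormedField L] [IsUltrametricDist L] [ProperSpace L]
    [NormedAlgebra K L] [FiniteDimensional K L] {n : ℕ} (hn : (n : K) ≠ 0) :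
    nsmulIndex (integerRing L) n = nsmulIndex (integerRing K) n ^ Module.finrank K L := by
  obtain ⟨g, hg⟩ := exists_linearEquiv_norm_le_one K L
  have hinj : Function.Injective (integerRingMap g.toLinearMap hg) := fun x y hxy => funext fun i =>
    Subtype.ext (congrFun (g.injective (congrArg Subtype.val hxy)) i)
  have hn_inj : Function.Injective
      (nsmulAddMonoidHom n : (Fin (Module.finrank K L) → integerRing K) →+ _) := fun x y hxy =>
    funext fun i => nsmulAddMonoidHom_integerRing_injective hn (congrFun hxy i)
  have hnL : (n : L) ≠ 0 := by
    simpa using (map_ne_zero (algebraMap K L)).2 hn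
  rw [nsmulIndex_of_injective n _ hinj
      (index_ne_zero_of_mem_nhds _ (range_integerRingMap_mem_nhds g hg)) hn_inj,
    (AddMonoidHom.ker_eq_bot_iff _).2 (nsmulAddMonoidHom_integerRing_injective hnL),
    AddSubgroup.card_bot, mul_one, nsmulIndex_pi, Fintype.card_fin]

theorem powIndex_two_units_of_finiteDimensional (L : Type*) [Field L] [Algebra K L]
    [FiniteDimensional K L] (h2 : (2 : K) ≠ 0) :
    powIndex Lˣ 2 = 4 * nsmulIndex (integerRing K) 2 ^ Module.finrank K L := by
  let := spectralNorm.nontriviallyNormedField K L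
  let := spectralNorm.normedAlgebra K L
  have := IsUltrametricDist.isUltrametricDist_of_isNonarchimedean_norm
    (isNonarchimedean_spectralNorm (K := K) (L := L))
  have := FiniteDimensional.proper K L
  have h2L : (2 : L) ≠ 0 := by
    rw [← map_ofNat (algebraMap K L) 2]
    exact (map_ne_zero _).2 h2
  rw [powIndex_two_units h2L, nsmulIndex_integerRing (K := K) (by simpa using h2)]

end LocalField
section NormIndex

variable {F : Type*} [Field F]

/-- `t` is a norm from `F(√a)`, i.e. a nonzero value of the binary form `x² - a y²`; for nonzero
`a` and `t` this says that the Hilbert symbol `(a, t)` is trivial. -/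
def IsNorm (a t : F) : Prop :=
  t ≠ 0 ∧ ∃ x y : F, t = x * x - a * (y * y)

theorem mem_range_powMonoidHom_two_iff {x : Fˣ} :
    x ∈ (powMonoidHom 2 : Fˣ →* Fˣ).range ↔ IsSquare (x : F) := by
  constructor
  · rintro ⟨y, rfl⟩
    exact ⟨y, by simp [sq]⟩
  · rintro ⟨y, hy⟩
    have hy0 : y ≠ 0 := left_ne_zero_of_mul (hy ▸ x.ne_zero)
    exact ⟨Units.mk0 y hy0, by ext; simp [hy, sq]⟩

/-- The norm `F(√a)ˣ → Fˣ`. -/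
def normUnits (a : F) : (QuadraticAlgebra F a 0)ˣ →* Fˣ :=
  Units.map QuadraticAlgebra.norm

/-- The inclusion `Fˣ → F(√a)ˣ`. -/
def unitsInclusion (a : F) : Fˣ →* (QuadraticAlgebra F a 0)ˣ :=
  Units.map (algebraMap F (QuadraticAlgebra F a 0)).toMonoidHom

theorem normUnits_unitsInclusion (a : F) (x : Fˣ) : normUnits a (unitsInclusion a x) = x ^ 2 := by
  ext
  simp [normUnits, unitsInclusion]

theorem fact_of_not_isSquare {a : F} (ha : ¬IsSquare a) : Fact (∀ r, r ^ 2 ≠ a + 0 * r) :=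
  ⟨fun r hr => ha ⟨r, by linear_combination -hr⟩⟩

theorem mem_range_normUnits_iff {a : F} (ha : ¬IsSquare a) {x : Fˣ} :
    x ∈ (normUnits a).range ↔ IsNorm a x := by
  have := fact_of_not_isSquare ha
  constructor
  · rintro ⟨z, rfl⟩
    refine ⟨Units.ne_zero _, z.val.re, z.val.im, ?_⟩
    simp only [normUnits, Units.coe_map, QuadraticAlgebra.norm_def]
    ring
  · rintro ⟨hx, u, v, huv⟩
    have hz : (⟨u, v⟩ : QuadraticAlgebra F a 0) ≠ 0 := by
      intro h
      obtain ⟨rfl, rfl⟩ : u = 0 ∧ v = 0 := QuadraticAlgebra.ext_iff.1 h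
      exact hx (huv.trans (by ring))
    refine ⟨Units.mk0 _ hz, Units.ext ?_⟩
    simp only [normUnits, Units.coe_map, QuadraticAlgebra.norm_def, huv,
      Units.val_mk0]
    ring

theorem isSquare_algebraMap_quadraticAlgebra_iff (h2 : (2 : F) ≠ 0) {a : F} (ha0 : a ≠ 0) {b : F} :
    IsSquare (algebraMap F (QuadraticAlgebra F a 0) b) ↔ IsSquare b ∨ IsSquare (b * a) := by
  constructor
  · rintro ⟨z, hz⟩
    have hre : b = z.re * z.re + a * z.im * z.im := by simpa using congrArg QuadraticAlgebra.re hz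
    have him : 0 = z.re * z.im + z.im * z.re := by simpa using congrArg QuadraticAlgebra.im hz
    have hprod : z.re * z.im = 0 :=
      (mul_eq_zero.1 (show 2 * (z.re * z.im) = 0 by linear_combination -him)).resolve_left h2
    rcases mul_eq_zero.1 hprod with h | h
    · rw [h] at hre
      exact Or.inr ⟨a * z.im, by linear_combination a * hre⟩
    · rw [h] at hre
      exact Or.inl ⟨z.re, by linear_combination hre⟩
  · rintro (⟨r, rfl⟩ | ⟨r, hr⟩)
    · exact ⟨algebraMap F _ r, map_mul _ _ _⟩
    · refine ⟨⟨0, r / a⟩, ?_⟩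
      ext
      · simp
        field_simp
        linear_combination hr
      · simp

theorem relIndex_comap_unitsInclusion (h2 : (2 : F) ≠ 0) {a : F} (ha0 : a ≠ 0) (ha : ¬IsSquare a) :
    (powMonoidHom 2 : Fˣ →* Fˣ).range.relIndex
      ((powMonoidHom 2 : (QuadraticAlgebra F a 0)ˣ →* _).range.comap (unitsInclusion a)) = 2 := by
  have := fact_of_not_isSquare ha
  have hmem (b : Fˣ) : unitsInclusion a b ∈ (powMonoidHom 2 : _ →* _).range ↔
      IsSquare (b : F) ∨ IsSquare (b * a : F) := by
    rw [mem_range_powMonoidHom_two_iff]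
    exact isSquare_algebraMap_quadraticAlgebra_iff h2 ha0
  rw [Subgroup.relIndex_eq_two_iff]
  refine ⟨Units.mk0 a ha0, ?_, fun b hb => ?_⟩
  · exact (hmem _).2 (Or.inr ⟨a, rfl⟩)
  · have hnot_both : ¬(IsSquare (b : F) ∧ IsSquare (b * a : F)) := fun ⟨h, h'⟩ =>
      ha (by simpa using h'.div h)
    simp only [mem_range_powMonoidHom_two_iff, Units.val_mul, Units.val_mk0, xor_iff_or_and_not_and]
    exact ⟨((hmem b).1 hb).symm, fun h => hnot_both h.symm⟩

/-- An element `w` of norm `c²` is `(w + c)² / (2 (re w + c))`, or is `-c`. -/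
theorem comap_normUnits (h2 : (2 : F) ≠ 0) {a : F} (ha0 : a ≠ 0) (ha : ¬IsSquare a) :
    (powMonoidHom 2 : Fˣ →* Fˣ).range.comap (normUnits a) =
      (unitsInclusion a).range ⊔ (powMonoidHom 2 : (QuadraticAlgebra F a 0)ˣ →* _).range := by
  have := fact_of_not_isSquare ha
  apply le_antisymm
  · rintro z ⟨c, hc⟩
    suffices ∃ (e : Fˣ) (y : (QuadraticAlgebra F a 0)ˣ), z = unitsInclusion a e * y ^ 2 by
      obtain ⟨e, y, rfl⟩ := this
      exact Subgroup.mul_mem_sup ⟨e, rfl⟩ ⟨y, rfl⟩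
    set w : QuadraticAlgebra F a 0 := z.val with hw
    have hnorm : w.re * w.re + 0 * w.re * w.im - a * w.im * w.im = c * c := by
      rw [← QuadraticAlgebra.norm_def, ← sq]
      exact (congrArg Units.val hc).symm
    by_cases h0 : w.re + c = 0
    · have hre : w.re = -c := eq_neg_of_add_eq_zero_left h0
      have him : w.im = 0 := by
        rw [hre] at hnorm
        have : a * (w.im * w.im) = 0 := by linear_combination -hnorm
        simpa [ha0] using this
      refine ⟨-c, 1, Units.ext (QuadraticAlgebra.ext ?_ ?_)⟩ <;>
        simp [unitsInclusion, ← hw, hre, him]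
    · have hy0 : w + algebraMap F _ (c : F) ≠ 0 := fun h =>
        h0 (by simpa using congrArg QuadraticAlgebra.re h)
      refine ⟨(Units.mk0 _ (mul_ne_zero h2 h0))⁻¹, Units.mk0 _ hy0, ?_⟩
      rw [map_inv, eq_inv_mul_iff_mul_eq]
      refine Units.ext (QuadraticAlgebra.ext ?_ ?_)
      · simp [unitsInclusion, ← hw, sq]
        linear_combination hnorm
      · simp [unitsInclusion, ← hw, sq]
        ring
  · rw [sup_le_iff]
    constructor
    · rintro _ ⟨x, rfl⟩
      exact ⟨x, (normUnits_unitsInclusion a x).symm⟩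
    · rintro _ ⟨x, rfl⟩
      exact ⟨normUnits a x, by simp⟩

theorem two_mul_powIndex_mul_index_range_normUnits (h2 : (2 : F) ≠ 0) {a : F} (ha0 : a ≠ 0)
    (ha : ¬IsSquare a) :
    2 * powIndex (QuadraticAlgebra F a 0)ˣ 2 * (normUnits a).range.index = powIndex Fˣ 2 ^ 2 := by
  set S := (powMonoidHom 2 : Fˣ →* Fˣ).range
  set S' := (powMonoidHom 2 : (QuadraticAlgebra F a 0)ˣ →* _).range
  have hS : S ≤ S'.comap (unitsInclusion a) := by
    rintro _ ⟨x, rfl⟩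
    exact ⟨unitsInclusion a x, by simp⟩
  have hSN : S ≤ (normUnits a).range := by
    rintro _ ⟨x, rfl⟩
    exact ⟨unitsInclusion a x, normUnits_unitsInclusion a x⟩
  have hindex : S.index = 2 * (S'.comap (unitsInclusion a)).index := by
    rw [← Subgroup.relIndex_mul_index hS, relIndex_comap_unitsInclusion h2 ha0 ha]
  have hindex' :
      S'.index = (S'.comap (unitsInclusion a)).index * (S.comap (normUnits a)).index := by
    rw [comap_normUnits h2 ha0 ha, Subgroup.index_comap, ← Subgroup.relIndex_sup_right,
      Subgroup.relIndex_mul_index le_sup_right]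
  have hindexN : S.index = (S.comap (normUnits a)).index * (normUnits a).range.index := by
    rw [Subgroup.index_comap, Subgroup.relIndex_mul_index hSN]
  calc 2 * S'.index * (normUnits a).range.index = S.index * S.index := by
        nth_rewrite 1 [hindex]
        rw [hindex', hindexN]
        ring
    _ = S.index ^ 2 := (sq _).symm

end NormIndex

section HilbertField

/-- A field of characteristic different from `2` with at least four square classes, over which the
norms from any quadratic extension form a subgroup of index `2`. These are the properties of local
fields on which the classification of quadratic forms rests. -/
class HilbertField (F : Type*) [Field F] : Prop where
  two_ne_zero : (2 : F) ≠ 0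
  exists_not_isNorm : ∀ a : F, ¬IsSquare a → ∃ c, c ≠ 0 ∧ ¬IsNorm a c
  isNorm_mul_of_not : ∀ a : F, ¬IsSquare a → ∀ x y, x ≠ 0 → y ≠ 0 → ¬IsNorm a x → ¬IsNorm a y →
    IsNorm a (x * y)
  exists_not_isSquare_mul : ∀ u v : F, u ≠ 0 → v ≠ 0 →
    ∃ c, c ≠ 0 ∧ ¬IsSquare (u * c) ∧ ¬IsSquare (v * c)

theorem exists_mul_notMem_of_two_lt_index {A : Type*} [CommGroup A] {S : Subgroup A}
    (hS : 2 < S.index) (a b : A) : ∃ c, a * c ∉ S ∧ b * c ∉ S := by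
  by_contra! hcover
  have huniv : (Set.univ : Set (A ⧸ S)) ⊆ {((a⁻¹ : A) : A ⧸ S), ((b⁻¹ : A) : A ⧸ S)} := by
    intro q _
    obtain ⟨c, rfl⟩ := QuotientGroup.mk_surjective q
    by_cases hac : a * c ∈ S
    · exact Or.inl (QuotientGroup.eq.2 (by simpa using hac)).symm
    · exact Or.inr (QuotientGroup.eq.2 (by simpa using hcover c hac)).symm
  have hcard := (Set.ncard_le_ncard huniv).trans (Set.ncard_insert_le _ _)
  rw [Set.ncard_univ, Set.ncard_singleton] at hcard
  exact hS.not_ge hcard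

theorem HilbertField.of_index {F : Type*} [Field F] (h2 : (2 : F) ≠ 0) (hsq : 2 < powIndex Fˣ 2)
    (hnorm : ∀ a : F, ¬IsSquare a → (normUnits a).range.index = 2) : HilbertField F where
  two_ne_zero := h2
  exists_not_isNorm a ha := by
    have hne : (normUnits a).range ≠ ⊤ := fun htop => by simpa [htop] using hnorm a ha
    obtain ⟨c, hc⟩ := SetLike.exists_not_mem_of_ne_top _ hne rfl
    exact ⟨c, c.ne_zero, fun h => hc ((mem_range_normUnits_iff ha).2 h)⟩
  isNorm_mul_of_not a ha x y hx hy hnx hny := by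
    have hmul := Subgroup.mul_mem_iff_of_index_two (hnorm a ha) (a := Units.mk0 x hx)
      (b := Units.mk0 y hy)
    simp only [mem_range_normUnits_iff ha, Units.val_mul, Units.val_mk0] at hmul
    exact hmul.2 (iff_of_false hnx hny)
  exists_not_isSquare_mul u v hu hv := by
    obtain ⟨c, huc, hvc⟩ :=
      exists_mul_notMem_of_two_lt_index hsq (Units.mk0 u hu) (Units.mk0 v hv)
    exact ⟨c, c.ne_zero, fun h => huc (mem_range_powMonoidHom_two_iff.2 h),
      fun h => hvc (mem_range_powMonoidHom_two_iff.2 h)⟩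

theorem HilbertField.of_finiteDimensional (K F : Type*) [NontriviallyNormedField K]
    [IsUltrametricDist K] [ProperSpace K] (h2 : (2 : K) ≠ 0) [Field F] [Algebra K F]
    [FiniteDimensional K F] : HilbertField F := by
  set q := nsmulIndex (integerRing K) 2 ^ Module.finrank K F
  have hq0 : q ≠ 0 := pow_ne_zero _ (nsmulIndex_integerRing_ne_zero (by simpa using h2))
  have hF : powIndex Fˣ 2 = 4 * q := powIndex_two_units_of_finiteDimensional F h2
  have h2F : (2 : F) ≠ 0 := by
    rw [← map_ofNat (algebraMap K F) 2]
    exact (map_ne_zero _).2 h2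
  refine .of_index h2F (by lia) fun a ha => ?_
  have := fact_of_not_isSquare ha
  have ha0 : a ≠ 0 := fun h => ha (h ▸ IsSquare.zero)
  have : FiniteDimensional K (QuadraticAlgebra F a 0) := Module.Finite.trans F _
  have hL : powIndex (QuadraticAlgebra F a 0)ˣ 2 = 4 * q ^ 2 := by
    rw [powIndex_two_units_of_finiteDimensional _ h2, ← Module.finrank_mul_finrank K F,
      QuadraticAlgebra.finrank_eq_two, pow_mul]
  have hindex := two_mul_powIndex_mul_index_range_normUnits h2F ha0 ha
  rw [hF, hL] at hindex
  refine Nat.eq_of_mul_eq_mul_left (show 0 < 8 * q ^ 2 by positivity) ?_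
  linarith

end HilbertField

section Norms

variable {F : Type*} [Field F]

theorem isNorm_mul_self (a : F) {t : F} (ht : t ≠ 0) : IsNorm a (t * t) :=
  ⟨mul_ne_zero ht ht, t, 0, by ring⟩

theorem isNorm_one (a : F) : IsNorm a 1 := by
  simpa using isNorm_mul_self a one_ne_zero

theorem IsNorm.mul {a s t : F} (hs : IsNorm a s) (ht : IsNorm a t) : IsNorm a (s * t) := by
  obtain ⟨hs0, x, y, rfl⟩ := hs
  obtain ⟨ht0, u, v, rfl⟩ := ht
  exact ⟨mul_ne_zero hs0 ht0, x * u + a * y * v, x * v + y * u, by ring⟩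

theorem IsNorm.of_mul_left {a s t : F} (hs : IsNorm a s) (hst : IsNorm a (s * t)) : IsNorm a t := by
  have h := (hs.mul hst).mul (isNorm_mul_self a (inv_ne_zero hs.1))
  have hs0 := hs.1
  convert h using 1
  field_simp

theorem isNorm_of_isSquare (h2 : (2 : F) ≠ 0) {a t : F} (ha : IsSquare a) (ha0 : a ≠ 0)
    (ht : t ≠ 0) : IsNorm a t := by
  obtain ⟨r, rfl⟩ := ha
  have hr : r ≠ 0 := left_ne_zero_of_mul ha0
  refine ⟨ht, (1 + t) / 2, (1 - t) / (2 * r), ?_⟩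
  field_simp
  ring

theorem IsNorm.symm (h2 : (2 : F) ≠ 0) {a c : F} (ha : a ≠ 0) (h : IsNorm a c) : IsNorm c a := by
  obtain ⟨hc, x, y, hxy⟩ := h
  by_cases hy : y = 0
  · exact isNorm_of_isSquare h2 ⟨x, by rw [hxy, hy]; ring⟩ hc ha
  · refine ⟨ha, x / y, 1 / y, ?_⟩
    field_simp
    rw [hxy]
    ring

theorem isNorm_comm (h2 : (2 : F) ≠ 0) {a c : F} (ha : a ≠ 0) (hc : c ≠ 0) :
    IsNorm a c ↔ IsNorm c a :=
  ⟨IsNorm.symm h2 ha, IsNorm.symm h2 hc⟩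

variable [HilbertField F]

theorem isNorm_mul_of_not_isNorm {a x y : F} (ha : a ≠ 0) (hx : x ≠ 0) (hy : y ≠ 0)
    (hnx : ¬IsNorm a x) (hny : ¬IsNorm a y) : IsNorm a (x * y) := by
  by_cases hsq : IsSquare a
  · exact absurd (isNorm_of_isSquare HilbertField.two_ne_zero hsq ha hx) hnx
  · exact HilbertField.isNorm_mul_of_not a hsq x y hx hy hnx hny

theorem isNorm_mul_iff {a x y : F} (ha : a ≠ 0) (hx : x ≠ 0) (hy : y ≠ 0) :
    IsNorm a (x * y) ↔ (IsNorm a x ↔ IsNorm a y) := by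
  by_cases hnx : IsNorm a x
  · exact ⟨fun h => iff_of_true hnx (hnx.of_mul_left h), fun h => hnx.mul (h.1 hnx)⟩
  · exact ⟨fun h => iff_of_false hnx fun hny => hnx (hny.of_mul_left (mul_comm x y ▸ h)),
      fun h => isNorm_mul_of_not_isNorm ha hx hy hnx fun hny => hnx (h.2 hny)⟩

theorem isNorm_mul_left_iff {a b c : F} (ha : a ≠ 0) (hb : b ≠ 0) (hc : c ≠ 0) :
    IsNorm (a * b) c ↔ (IsNorm a c ↔ IsNorm b c) := by
  have h2 : (2 : F) ≠ 0 := HilbertField.two_ne_zero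
  rw [isNorm_comm h2 (mul_ne_zero ha hb) hc, isNorm_comm h2 ha hc, isNorm_comm h2 hb hc,
    isNorm_mul_iff hc ha hb]

theorem exists_isNorm_isNorm_mul {a b z : F} (hz : z ≠ 0) (hab : ¬IsSquare (a * b)) :
    ∃ s, IsNorm a s ∧ IsNorm b (s * z) := by
  have hab0 : a * b ≠ 0 := fun h => hab (h ▸ IsSquare.zero)
  have ha : a ≠ 0 := left_ne_zero_of_mul hab0
  have hb : b ≠ 0 := right_ne_zero_of_mul hab0
  obtain ⟨c, hc, hnc⟩ := HilbertField.exists_not_isNorm _ hab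
  rw [isNorm_mul_left_iff ha hb hc] at hnc
  by_cases hbz : IsNorm b z
  · exact ⟨1, isNorm_one a, by rwa [one_mul]⟩
  by_cases haz : IsNorm a z
  · exact ⟨z, haz, isNorm_mul_self b hz⟩
  by_cases hac : IsNorm a c
  · exact ⟨c, hac, (isNorm_mul_iff hb hc hz).2 (by tauto)⟩
  · refine ⟨c * z, (isNorm_mul_iff ha hc hz).2 (by tauto), ?_⟩
    rw [mul_assoc]
    exact IsNorm.mul (by tauto) (isNorm_mul_self b hz)

theorem exists_isNorm_not_isSquare {a : F} (ha : a ≠ 0) : ∃ t, IsNorm a t ∧ ¬IsSquare t := by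
  by_cases hsq : IsSquare a
  · obtain ⟨c, hc, hnc, -⟩ :=
      HilbertField.exists_not_isSquare_mul (1 : F) 1 one_ne_zero one_ne_zero
    exact ⟨c, isNorm_of_isSquare HilbertField.two_ne_zero hsq ha hc, by simpa using hnc⟩
  · obtain ⟨d, hd, hnd⟩ := HilbertField.exists_not_isNorm a hsq
    obtain ⟨c, hc, hnc, hndc⟩ := HilbertField.exists_not_isSquare_mul 1 d one_ne_zero hd
    by_cases hac : IsNorm a c
    · exact ⟨c, hac, by simpa using hnc⟩
    · exact ⟨d * c, isNorm_mul_of_not_isNorm ha hd hc hnd hac, hndc⟩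

theorem exists_isNorm_not_isSquare_mul {a u : F} (ha : a ≠ 0) (hu : u ≠ 0) :
    ∃ t, IsNorm a t ∧ ¬IsSquare (u * t) := by
  by_cases hsq : IsSquare u
  · obtain ⟨t, hat, ht⟩ := exists_isNorm_not_isSquare ha
    refine ⟨t, hat, fun h => ht ?_⟩
    simpa [hu] using h.div hsq
  · exact ⟨1, isNorm_one a, by simpa using hsq⟩

end Norms

section Ternary

variable {F : Type*} [Field F]

theorem exists_ternary_eq_of_isotropic (h2 : (2 : F) ≠ 0) {a b c x y z : F} (hc : c ≠ 0)
    (hz : z ≠ 0) (h : a * (x * x) + b * (y * y) + c * (z * z) = 0) (e : F) :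
    ∃ x y z, a * (x * x) + b * (y * y) + c * (z * z) = e := by
  set t := (e - c) / (2 * c) with ht
  have hct : c * (2 * t + 1) = e := by
    rw [ht]
    field_simp
    ring
  refine ⟨t * (x / z), t * (y / z), t + 1, ?_⟩
  have hscaled : a * (x / z * (x / z)) + b * (y / z * (y / z)) + c = 0 := by
    field_simp
    linear_combination h
  linear_combination t ^ 2 * hscaled + hct

variable [HilbertField F]

theorem exists_ternary_eq_mul_sq {a b c e : F} (ha : a ≠ 0) (he : e ≠ 0)
    (hdisc : ¬IsSquare (-(a * b * c) * e)) :
    ∃ x y z w, a * (x * x) + b * (y * y) + c * (z * z) = e * (w * w) ∧ (z ≠ 0 ∨ w ≠ 0) := by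
  obtain ⟨s, ⟨-, p, q, hs⟩, hse, u, v, huv⟩ := exists_isNorm_isNorm_mul (a := -(a * b))
    (b := e * c) (div_ne_zero he ha) (by convert hdisc using 2; ring)
  refine ⟨p / a, q, v, u / e, ?_, ?_⟩
  · rw [hs] at huv
    field_simp at huv ⊢
    linear_combination huv
  · by_contra! h
    obtain ⟨rfl, hu⟩ := h
    rw [div_eq_zero_iff, or_iff_left he] at hu
    exact hse (by rw [huv, hu]; ring)

theorem exists_ternary_eq {a b c e : F} (hdisc : ¬IsSquare (-(a * b * c) * e)) :
    ∃ x y z, a * (x * x) + b * (y * y) + c * (z * z) = e := by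
  have hne : -(a * b * c) * e ≠ 0 := fun h => hdisc (h ▸ IsSquare.zero)
  simp only [mul_ne_zero_iff, neg_ne_zero] at hne
  obtain ⟨⟨⟨ha, -⟩, hc⟩, he⟩ := hne
  obtain ⟨x, y, z, w, h, hzw⟩ := exists_ternary_eq_mul_sq ha he hdisc
  by_cases hw : w = 0
  · exact exists_ternary_eq_of_isotropic HilbertField.two_ne_zero hc (hzw.neg_resolve_right hw)
      (by rw [h, hw]; ring) e
  · refine ⟨x / w, y / w, z / w, ?_⟩
    field_simp
    linear_combination h

theorem exists_quaternary_eq {a b c d e : F} (ha : a ≠ 0) (hb : b ≠ 0) (hc : c ≠ 0) (hd : d ≠ 0)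
    (he : e ≠ 0) :
    ∃ x y z w, a * (x * x) + b * (y * y) + c * (z * z) + d * (w * w) = e := by
  -- `c * t`, with `t` a norm from `F(√(-cd))`, is a value of `c z² + d w²`.
  obtain ⟨t, ⟨-, u, v, ht⟩, hdisc⟩ := exists_isNorm_not_isSquare_mul (a := -(c * d))
    (u := -(a * b * c) * e) (by simp [hc, hd]) (by simp [ha, hb, hc, he])
  obtain ⟨x, y, z, h⟩ := exists_ternary_eq (a := a) (b := b) (c := c * t) (e := e)
    (by convert hdisc using 2; ring)
  exact ⟨x, y, u * z, c * v * z, by rw [← h, ht]; ring⟩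

/-- The form `x u² - xy w² + y v²` represents `θ` over `F`, hence a square over `E`. -/
theorem isNorm_map {E : Type*} [Field E] (f : F →+* E) {θ : F} (hθ : ¬IsSquare θ)
    (hfθ : IsSquare (f θ)) {x y : F} (hx : x ≠ 0) (hy : y ≠ 0) : IsNorm (f x) (f y) := by
  obtain ⟨i, hi⟩ := hfθ
  have hθ0 : θ ≠ 0 := fun h => hθ (h ▸ IsSquare.zero)
  obtain ⟨u, v, w, h⟩ := exists_ternary_eq (a := x) (b := y) (c := -(x * y)) (e := θ) (by
    have hquot : -(x * y * -(x * y)) * θ / (x * y * (x * y)) = θ := by field_simp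
    exact fun hsq => hθ (hquot ▸ hsq.div (IsSquare.mul_self (x * y))))
  have h2 : (2 : E) ≠ 0 := by
    rw [← map_ofNat f 2]
    exact (map_ne_zero f).2 HilbertField.two_ne_zero
  have hnorm : f y * (f v * f v - f x * (f w * f w)) = i * i - f x * (f u * f u) := by
    rw [← hi, ← h]
    simp only [map_add, map_mul, map_neg]
    ring
  by_cases h0 : i * i - f x * (f u * f u) = 0
  · refine isNorm_of_isSquare h2 ⟨i / f u, ?_⟩ ((map_ne_zero f).2 hx) ((map_ne_zero f).2 hy)
    have hu : f u ≠ 0 := fun hu => hθ0 ((map_eq_zero f).1 (by rw [hi]; simpa [hu] using h0))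
    field_simp
    linear_combination -h0
  · have hprod : IsNorm (f x) (f y * (f v * f v - f x * (f w * f w))) := ⟨hnorm ▸ h0, _, _, hnorm⟩
    exact IsNorm.of_mul_left ⟨right_ne_zero_of_mul hprod.1, _, _, rfl⟩ (mul_comm (f y) _ ▸ hprod)

end Ternary

section Congruence

variable {F : Type*} [Field F] {ι κ τ : Type*} [Fintype ι] [DecidableEq ι]

/-- Congruence of matrices: `A` and `B` are the Gram matrices of isometric bilinear forms. -/
def Cong (A B : Matrix ι ι F) : Prop :=
  ∃ k : GL ι F, (k : Matrix ι ι F)ᵀ * A * k = B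

theorem cong_of_det_ne_zero (A : Matrix ι ι F) {k : Matrix ι ι F} (hk : k.det ≠ 0) :
    Cong A (kᵀ * A * k) :=
  ⟨GeneralLinearGroup.mkOfDetNeZero k hk, rfl⟩

theorem Cong.trans {A B C : Matrix ι ι F} (h : Cong A B) (h' : Cong B C) : Cong A C := by
  obtain ⟨k, rfl⟩ := h
  obtain ⟨l, rfl⟩ := h'
  refine ⟨k * l, ?_⟩
  rw [Units.val_mul, transpose_mul]
  simp only [Matrix.mul_assoc]

theorem Cong.symm {A B : Matrix ι ι F} (h : Cong A B) : Cong B A := by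
  obtain ⟨k, rfl⟩ := h
  refine ⟨k⁻¹, ?_⟩
  have hk : (k : Matrix ι ι F) * (k⁻¹ : GL ι F) = 1 := k.mul_inv
  have hk' : ((k⁻¹ : GL ι F) : Matrix ι ι F)ᵀ * (k : Matrix ι ι F)ᵀ = 1 := by
    rw [← transpose_mul, hk, transpose_one]
  calc _ = ((k⁻¹ : GL ι F) : Matrix ι ι F)ᵀ * (k : Matrix ι ι F)ᵀ * A *
        ((k : Matrix ι ι F) * (k⁻¹ : GL ι F)) := by simp only [Matrix.mul_assoc]
    _ = A := by rw [hk, hk', Matrix.one_mul, Matrix.mul_one]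

theorem Cong.map {E : Type*} [Field E] (f : F →+* E) {A B : Matrix ι ι F} (h : Cong A B) :
    Cong (A.map f) (B.map f) := by
  obtain ⟨k, rfl⟩ := h
  refine ⟨GeneralLinearGroup.map f k, ?_⟩
  simp only [Matrix.map_mul, transpose_map]
  rfl

theorem Cong.isSymm {A B : Matrix ι ι F} (h : Cong A B) (hA : A.IsSymm) : B.IsSymm := by
  obtain ⟨k, rfl⟩ := h
  simp only [IsSymm, transpose_mul, transpose_transpose, hA.eq, Matrix.mul_assoc]

theorem Cong.exists_det_eq {A B : Matrix ι ι F} (h : Cong A B) :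
    ∃ r, r ≠ 0 ∧ B.det = A.det * (r * r) := by
  obtain ⟨k, rfl⟩ := h
  refine ⟨(k : Matrix ι ι F).det, GeneralLinearGroup.det_ne_zero k, ?_⟩
  rw [det_mul, det_mul, det_transpose]
  ring

theorem Cong.reindex [Fintype κ] [DecidableEq κ] (e : ι ≃ κ) {A B : Matrix ι ι F} (h : Cong A B) :
    Cong (Matrix.reindex e e A) (Matrix.reindex e e B) := by
  obtain ⟨k, rfl⟩ := h
  have hk : (Matrix.reindex e e (k : Matrix ι ι F)).det ≠ 0 := by
    rw [det_reindex_self]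
    exact GeneralLinearGroup.det_ne_zero k
  convert cong_of_det_ne_zero (Matrix.reindex e e A) hk using 1
  simp only [reindex_apply, transpose_submatrix, submatrix_mul_equiv]

theorem cong_reindex_iff [Fintype κ] [DecidableEq κ] (e : ι ≃ κ) {A B : Matrix ι ι F} :
    Cong (Matrix.reindex e e A) (Matrix.reindex e e B) ↔ Cong A B :=
  ⟨fun h => by simpa using h.reindex e.symm, Cong.reindex e⟩

theorem Cong.fromBlocks [Fintype τ] [DecidableEq τ] {A B : Matrix ι ι F} (h : Cong A B)
    (C : Matrix τ τ F) : Cong (fromBlocks A 0 0 C) (fromBlocks B 0 0 C) := by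
  obtain ⟨k, rfl⟩ := h
  have hk : (Matrix.fromBlocks (k : Matrix ι ι F) 0 0 (1 : Matrix τ τ F)).det ≠ 0 := by
    rw [det_fromBlocks_zero₂₁, det_one, mul_one]
    exact GeneralLinearGroup.det_ne_zero k
  convert cong_of_det_ne_zero (Matrix.fromBlocks A 0 0 C) hk using 1
  simp [fromBlocks_multiply, fromBlocks_transpose]

theorem cong_diagonal_mul_self (d : ι → F) {s : ι → F} (hs : ∀ i, s i ≠ 0) :
    Cong (diagonal d) (diagonal fun i => d i * (s i * s i)) := by
  have hdet : (diagonal s).det ≠ 0 := by simpa [Finset.prod_ne_zero_iff] using hs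
  convert cong_of_det_ne_zero (diagonal d) hdet using 1
  simp only [diagonal_transpose, diagonal_mul_diagonal]
  congr with i
  ring

theorem Cong.exists_dotProduct_mulVec_eq {A B : Matrix ι ι F} (h : Cong A B) {c : F}
    (hB : ∃ v, v ⬝ᵥ B *ᵥ v = c) : ∃ v, v ⬝ᵥ A *ᵥ v = c := by
  obtain ⟨k, rfl⟩ := h
  obtain ⟨v, rfl⟩ := hB
  refine ⟨k *ᵥ v, ?_⟩
  rw [← mulVec_mulVec, ← mulVec_mulVec, dotProduct_mulVec v, vecMul_transpose]

theorem exists_cong_diagonal (h2 : (2 : F) ≠ 0) {n : ℕ} {A : Matrix (Fin n) (Fin n) F}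
    (hA : A.IsSymm) : ∃ d, Cong A (diagonal d) := by
  have := invertibleOfNonzero h2
  have hsymm : LinearMap.IsSymm A.toBilin' :=
    LinearMap.BilinForm.isSymm_iff.1 (isSymm_toBilin'_iff_isSymm.2 hA)
  obtain ⟨v, hv⟩ := LinearMap.BilinForm.exists_orthogonal_basis hsymm
  let b := Pi.basisFun F (Fin n)
  let w := v.reindex (finCongr (Module.finrank_fin_fun F))
  have hw : (b.toMatrix w)ᵀ * A * b.toMatrix w = LinearMap.BilinForm.toMatrix w A.toBilin' := by
    rw [← LinearMap.BilinForm.toMatrix_mul_basis_toMatrix b, LinearMap.BilinForm.toMatrix_basisFun,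
      LinearMap.BilinForm.toMatrix'_toBilin']
  have := b.invertibleToMatrix w
  refine ⟨fun i => A.toBilin' (w i) (w i), ?_⟩
  convert cong_of_det_ne_zero A (isUnit_det_of_invertible (b.toMatrix w)).ne_zero
  rw [hw]
  ext i i'
  rw [LinearMap.BilinForm.toMatrix_apply, diagonal_apply]
  split_ifs with hi
  · rw [hi]
  · rw [Module.Basis.reindex_apply, Module.Basis.reindex_apply]
    exact (hv ((finCongr _).symm.injective.ne hi)).symm

theorem exists_det_ne_zero_col_eq {v : ι → F} (hv : v ≠ 0) (i : ι) :
    ∃ k : Matrix ι ι F, k.det ≠ 0 ∧ k.col i = v := by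
  obtain ⟨l, hl⟩ := Function.ne_iff.1 hv
  let s := Equiv.swap i l
  refine ⟨((1 : Matrix ι ι F).updateCol l v).submatrix id s, ?_, ?_⟩
  · rw [det_permute', ← cramer_apply, cramer_one]
    exact mul_ne_zero ((Equiv.Perm.sign s).isUnit.map (Int.castRingHom F)).ne_zero hl
  · ext m
    simp [s]

theorem cong_fromBlocks_of_isSymm [Fintype τ] [DecidableEq τ] {A : Matrix ι ι F}
    {B : Matrix ι τ F} {D : Matrix τ τ F} (hD : D.IsSymm) (hD0 : D.det ≠ 0) :
    Cong (fromBlocks A B Bᵀ D) (fromBlocks (A - B * D⁻¹ * Bᵀ) 0 0 D) := by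
  have := D.invertibleOfIsUnitDet hD0.isUnit
  have hk : (fromBlocks (1 : Matrix ι ι F) 0 (⅟D * Bᵀ) (1 : Matrix τ τ F)).det ≠ 0 := by
    simp
  refine Cong.symm ?_
  convert cong_of_det_ne_zero _ hk using 1
  rw [fromBlocks_eq_of_invertible₂₂, fromBlocks_transpose, transpose_mul, transpose_transpose,
    invOf_eq_nonsing_inv, transpose_nonsing_inv, hD.eq, transpose_one, transpose_zero,
    transpose_one]

end Congruence

section OrthSum

variable {F : Type*} [Field F] {ι : Type*} [Fintype ι] [DecidableEq ι]

theorem exists_mul_self_mul_one_sub_eq (h2 : (2 : F) ≠ 0) (x : F) :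
    ∃ s, s * s * (1 - x * x) = 1 + 2 * s * x := by
  rcases eq_or_ne x 1 with rfl | hx
  · exact ⟨-1 / 2, by field_simp; ring⟩
  · have hx' : 1 - x ≠ 0 := sub_ne_zero.2 hx.symm
    exact ⟨1 / (1 - x), by field_simp; ring⟩

theorem Cong.of_fromBlocks_smul_one (h2 : (2 : F) ≠ 0) {B B' : Matrix ι ι F} (hB' : B'.det ≠ 0)
    {c : F} (h : Cong (Matrix.fromBlocks B 0 0 (c • (1 : Matrix (Fin 1) (Fin 1) F)))
      (Matrix.fromBlocks B' 0 0 (c • (1 : Matrix (Fin 1) (Fin 1) F)))) : Cong B B' := by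
  obtain ⟨k, hk⟩ := h
  obtain ⟨M, W, Y, a, hkB⟩ : ∃ M W Y a, (k : Matrix (ι ⊕ Fin 1) (ι ⊕ Fin 1) F) =
    Matrix.fromBlocks M W Y a := ⟨_, _, _, _, (fromBlocks_toBlocks _).symm⟩
  obtain ⟨x, rfl⟩ : ∃ x, a = x • (1 : Matrix (Fin 1) (Fin 1) F) :=
    ⟨a 0 0, by ext i j; fin_cases i; fin_cases j; simp⟩
  simp only [hkB, fromBlocks_transpose, fromBlocks_multiply, Matrix.mul_zero, add_zero, zero_add,
    transpose_smul, transpose_one, Matrix.mul_smul, Matrix.smul_mul, Matrix.mul_one,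
    Matrix.one_mul, smul_smul, fromBlocks_inj] at hk
  obtain ⟨hMM, hMW, hWM, hWW⟩ := hk
  replace hMM := eq_sub_of_add_eq hMM
  replace hMW := eq_neg_of_add_eq_zero_left hMW
  replace hWM := eq_neg_of_add_eq_zero_left hWM
  replace hWW := eq_sub_of_add_eq hWW
  obtain ⟨s, hs⟩ := exists_mul_self_mul_one_sub_eq h2 x
  -- `M + s W Y` is `k` followed by the reflection that takes the image of the last basis vector
  -- back to plus or minus itself; the value of `s` is the condition for this to be an isometry.
  have key : (M + s • (W * Y))ᵀ * B * (M + s • (W * Y)) = B' := by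
    calc (M + s • (W * Y))ᵀ * B * (M + s • (W * Y))
      _ = Mᵀ * B * M + s • (Mᵀ * B * W * Y) + s • (Yᵀ * (Wᵀ * B * M)) +
          (s * s) • (Yᵀ * (Wᵀ * B * W) * Y) := by
        simp only [transpose_add, transpose_smul, transpose_mul, Matrix.add_mul, Matrix.mul_add,
          Matrix.mul_assoc, smul_smul, smul_add, Matrix.smul_mul, Matrix.mul_smul]
        abel
      _ = B' + (c * (s * s * (1 - x * x) - (1 + 2 * s * x))) • (Yᵀ * Y) := by
        rw [hMM, hMW, hWM, hWW]
        simp only [← sub_smul, smul_smul, Matrix.neg_mul, Matrix.mul_neg, Matrix.smul_mul,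
          Matrix.mul_smul, Matrix.mul_one]
        module
      _ = B' := by rw [hs, sub_self, mul_zero, zero_smul, add_zero]
  have hdet : (M + s • (W * Y)).det ≠ 0 := by
    intro h0
    rw [← key, det_mul, h0, mul_zero] at hB'
    exact hB' rfl
  exact key ▸ cong_of_det_ne_zero B hdet

theorem exists_cong_fromBlocks_smul_one {A : Matrix (ι ⊕ Fin 1) (ι ⊕ Fin 1) F} (hA : A.IsSymm)
    {c : F} (hc : c ≠ 0) (h : ∃ v, v ⬝ᵥ A *ᵥ v = c) :
    ∃ B, Cong A (fromBlocks B 0 0 (c • (1 : Matrix (Fin 1) (Fin 1) F))) := by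
  obtain ⟨v, hv⟩ := h
  have hv0 : v ≠ 0 := by
    rintro rfl
    simp [hc.symm] at hv
  obtain ⟨k, hk, hkv⟩ := exists_det_ne_zero_col_eq hv0 (Sum.inr 0)
  have hA' : Cong A (kᵀ * A * k) := cong_of_det_ne_zero A hk
  set A' := kᵀ * A * k
  have hcorner : A'.toBlocks₂₂ = c • 1 := by
    ext i l
    fin_cases i
    fin_cases l
    calc A'.toBlocks₂₂ 0 0
      _ = k.col (Sum.inr 0) ⬝ᵥ A *ᵥ k.col (Sum.inr 0) := mul_mul_apply _ _ _ _ _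
      _ = (c • (1 : Matrix (Fin 1) (Fin 1) F)) 0 0 := by rw [hkv, hv]; simp
  have hblocks : A' = fromBlocks A'.toBlocks₁₁ A'.toBlocks₁₂ A'.toBlocks₁₂ᵀ (c • 1) := by
    rw [← hcorner, show A'.toBlocks₁₂ᵀ = A'.toBlocks₂₁ from congrArg toBlocks₂₁ (hA'.isSymm hA),
      fromBlocks_toBlocks]
  have hschur := cong_fromBlocks_of_isSymm (A := A'.toBlocks₁₁) (B := A'.toBlocks₁₂)
    (isSymm_one.smul c) (by simpa using hc)
  rw [← hblocks] at hschur
  exact ⟨_, hA'.trans hschur⟩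

/-- The Gram matrix `B ⊥ ⟨c⟩` of an orthogonal sum with a one-dimensional form. -/
def orthSum {n : ℕ} (B : Matrix (Fin n) (Fin n) F) (c : F) : Matrix (Fin (n + 1)) (Fin (n + 1)) F :=
  reindex finSumFinEquiv finSumFinEquiv (fromBlocks B 0 0 (c • (1 : Matrix (Fin 1) (Fin 1) F)))

theorem det_orthSum {n : ℕ} (B : Matrix (Fin n) (Fin n) F) (c : F) :
    (orthSum B c).det = B.det * c := by
  rw [orthSum, det_reindex_self, det_fromBlocks_zero₂₁, det_smul, det_one, mul_one,
    Fintype.card_fin, pow_one]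

theorem isSymm_orthSum_iff {n : ℕ} {B : Matrix (Fin n) (Fin n) F} {c : F} :
    (orthSum B c).IsSymm ↔ B.IsSymm := by
  rw [orthSum, IsSymm, transpose_reindex, (reindex _ _).injective.eq_iff, ← IsSymm,
    isSymm_fromBlocks_iff]
  simp [IsSymm]

theorem map_orthSum {E : Type*} [Field E] (f : F →+* E) {n : ℕ} (B : Matrix (Fin n) (Fin n) F)
    (c : F) : (orthSum B c).map f = orthSum (B.map f) (f c) := by
  simp only [orthSum, reindex_apply, ← submatrix_map, fromBlocks_map]
  congr 2 <;> ext <;> simp [Matrix.one_apply, apply_ite f]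

theorem Cong.orthSum {n : ℕ} {A B : Matrix (Fin n) (Fin n) F} (h : Cong A B) (c : F) :
    Cong (orthSum A c) (orthSum B c) :=
  (h.fromBlocks _).reindex _

theorem Cong.of_orthSum (h2 : (2 : F) ≠ 0) {n : ℕ} {A B : Matrix (Fin n) (Fin n) F}
    (hB : B.det ≠ 0) {c : F} (h : Cong (OrthPair.orthSum A c) (OrthPair.orthSum B c)) : Cong A B :=
  .of_fromBlocks_smul_one h2 hB ((cong_reindex_iff _).1 h)

theorem exists_cong_orthSum {n : ℕ} {A : Matrix (Fin (n + 1)) (Fin (n + 1)) F} (hA : A.IsSymm)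
    {c : F} (hc : c ≠ 0) (h : ∃ v, v ⬝ᵥ A *ᵥ v = c) : ∃ B, Cong A (orthSum B c) := by
  obtain ⟨v, hv⟩ := h
  let e : Fin n ⊕ Fin 1 ≃ Fin (n + 1) := finSumFinEquiv
  have hve : (v ∘ e) ⬝ᵥ A.submatrix e e *ᵥ (v ∘ e) = c := by
    rw [submatrix_mulVec_equiv, Function.comp_assoc, e.self_comp_symm, Function.comp_id,
      comp_equiv_dotProduct_comp_equiv, hv]
  obtain ⟨B, hB⟩ := exists_cong_fromBlocks_smul_one (hA.submatrix e) hc ⟨_, hve⟩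
  refine ⟨B, ?_⟩
  simpa [orthSum] using hB.reindex e

end OrthSum

section Discriminant

variable {F : Type*} [Field F] {n : ℕ}

/-- `A` is the Gram matrix of a symmetric bilinear form of discriminant `D`: its determinant lies
in the square class of `D`. -/
def HasDisc (A : Matrix (Fin n) (Fin n) F) (D : F) : Prop :=
  A.IsSymm ∧ ∃ r, r ≠ 0 ∧ A.det = D * (r * r)

theorem HasDisc.det_ne_zero {A : Matrix (Fin n) (Fin n) F} {D : F} (hA : HasDisc A D)
    (hD : D ≠ 0) : A.det ≠ 0 := by
  obtain ⟨-, r, hr, hdet⟩ := hA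
  rw [hdet]
  exact mul_ne_zero hD (mul_ne_zero hr hr)

theorem HasDisc.cong {A B : Matrix (Fin n) (Fin n) F} {D : F} (hA : HasDisc A D) (h : Cong A B) :
    HasDisc B D := by
  obtain ⟨hsymm, r, hr, hdet⟩ := hA
  obtain ⟨s, hs, hdet'⟩ := h.exists_det_eq
  exact ⟨h.isSymm hsymm, r * s, mul_ne_zero hr hs, by rw [hdet', hdet]; ring⟩

theorem hasDisc_orthSum_iff {B : Matrix (Fin n) (Fin n) F} {c D : F} (hc : c ≠ 0) :
    HasDisc (orthSum B c) D ↔ HasDisc B (D * c) := by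
  simp only [HasDisc, isSymm_orthSum_iff, det_orthSum]
  refine and_congr_right fun _ => ⟨?_, ?_⟩
  · rintro ⟨r, hr, h⟩
    refine ⟨r / c, div_ne_zero hr hc, ?_⟩
    field_simp
    linear_combination h
  · rintro ⟨r, hr, h⟩
    exact ⟨r * c, mul_ne_zero hr hc, by rw [h]; ring⟩

end Discriminant

section Binary

variable {F : Type*} [Field F]

/-- The Gram matrix of `a (x² + D y²)`: up to congruence, the binary form of discriminant `D` that
takes the value `a`. -/
def binary (a D : F) : Matrix (Fin 2) (Fin 2) F :=
  diagonal ![a, a * D]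

theorem hasDisc_binary {a D : F} (ha : a ≠ 0) : HasDisc (binary a D) D :=
  ⟨isSymm_diagonal _, a, ha, by
    simp only [binary, det_diagonal, Fin.prod_univ_two, cons_val]
    ring⟩

theorem map_binary {E : Type*} [Field E] (f : F →+* E) (a D : F) :
    (binary a D).map f = binary (f a) (f D) := by
  rw [binary, binary, diagonal_map f.map_zero, ← map_mul]
  congr with i
  fin_cases i <;> rfl

theorem cong_binary_mul_self (a D : F) {e : F} (he : e ≠ 0) :
    Cong (binary a D) (binary a (D * (e * e))) := by
  have hs : ∀ i, (![1, e] : Fin 2 → F) i ≠ 0 := by simp [Fin.forall_fin_two, he]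
  have hd : (fun i => ![a, a * D] i * (![1, e] i * ![1, e] i)) = ![a, a * (D * (e * e))] := by
    ext i
    fin_cases i <;> simp [mul_assoc]
  rw [binary, binary, ← hd]
  exact cong_diagonal_mul_self ![a, a * D] hs

theorem HasDisc.exists_cong_binary (h2 : (2 : F) ≠ 0) {A : Matrix (Fin 2) (Fin 2) F} {D : F}
    (hD : D ≠ 0) (hA : HasDisc A D) : ∃ a, a ≠ 0 ∧ Cong A (binary a D) := by
  obtain ⟨d, hd⟩ := exists_cong_diagonal h2 hA.1
  have hdisc := hA.cong hd
  have hne := hdisc.det_ne_zero hD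
  obtain ⟨-, r, hr, hdet⟩ := hdisc
  rw [det_diagonal, Fin.prod_univ_two] at hdet hne
  have hd0 : d 0 ≠ 0 := left_ne_zero_of_mul hne
  have hd1 : d 1 = d 0 * (D * (r / d 0 * (r / d 0))) := by
    field_simp
    linear_combination hdet
  have hbinary : diagonal d = binary (d 0) (D * (r / d 0 * (r / d 0))) := by
    rw [binary, ← hd1]
    congr with i
    fin_cases i <;> rfl
  rw [hbinary] at hd
  exact ⟨d 0, hd0, hd.trans (cong_binary_mul_self _ _ (div_ne_zero hr hd0)).symm⟩

theorem cong_binary_iff_isNorm {a t D : F} (ha : a ≠ 0) (ht : t ≠ 0) :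
    Cong (binary a D) (binary (a * t) D) ↔ IsNorm (-D) t := by
  constructor
  · rintro ⟨k, hk⟩
    have h00 : a * (k 0 0 * k 0 0) + a * D * (k 1 0 * k 1 0) = a * t := by
      have h := congrFun (congrFun hk 0) 0
      simp only [mul_mul_apply, binary, mulVec_diagonal, dotProduct, Fin.sum_univ_two,
        transpose_apply, cons_val_zero, cons_val_one, diagonal_apply_eq] at h
      linear_combination h
    refine ⟨ht, k 0 0, k 1 0, mul_left_cancel₀ ha ?_⟩
    linear_combination -h00
  · rintro ⟨-, x, y, rfl⟩
    have hk : (!![x, -D * y; y, x] : Matrix (Fin 2) (Fin 2) F).det ≠ 0 := by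
      rw [det_fin_two_of]
      convert ht using 1
      ring
    convert cong_of_det_ne_zero _ hk using 1
    ext i l
    fin_cases i <;> fin_cases l <;> simp [binary, Matrix.mul_apply, Fin.sum_univ_two] <;> ring

end Binary

section Classification

variable {F : Type*} [Field F] [HilbertField F]

theorem HasDisc.exists_dotProduct_mulVec_eq {m : ℕ} {A : Matrix (Fin (m + 3)) (Fin (m + 3)) F}
    {D c : F} (hA : HasDisc A D) (hDc : ¬IsSquare (-D * c)) : ∃ v, v ⬝ᵥ A *ᵥ v = c := by
  have hne : -D * c ≠ 0 := fun h => hDc (h ▸ IsSquare.zero)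
  obtain ⟨d, hd⟩ := exists_cong_diagonal HilbertField.two_ne_zero hA.1
  have hdisc := hA.cong hd
  refine hd.exists_dotProduct_mulVec_eq ?_
  have hprod := hdisc.det_ne_zero (neg_ne_zero.1 (left_ne_zero_of_mul hne))
  obtain ⟨-, r, hr, hdet⟩ := hdisc
  rw [det_diagonal] at hdet hprod
  rw [Finset.prod_ne_zero_iff] at hprod
  simp only [Finset.mem_univ, forall_const] at hprod
  cases m with
  | zero =>
    obtain ⟨x, y, z, h⟩ := exists_ternary_eq (a := d 0) (b := d 1) (c := d 2) (e := c) (by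
      rw [← Fin.prod_univ_three, hdet]
      intro hsq
      apply hDc
      have hquot : -(D * (r * r)) * c / (r * r) = -D * c := by field_simp
      exact hquot ▸ hsq.div (IsSquare.mul_self r))
    refine ⟨![x, y, z], ?_⟩
    simp only [dotProduct, mulVec_diagonal, Fin.sum_univ_succ, cons_val_zero, cons_val_succ,
      Fin.succ_zero_eq_one, Finset.univ_unique, Fin.default_eq_zero, cons_val_fin_one,
      Finset.sum_singleton, Fin.succ_one_eq_two]
    linear_combination h
  | succ m =>
    obtain ⟨x, y, z, w, h⟩ := exists_quaternary_eq (hprod 0) (hprod 1) (hprod 2)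
      (hprod (Fin.succ 2)) (right_ne_zero_of_mul hne)
    refine ⟨vecCons x (vecCons y (vecCons z (vecCons w 0))), ?_⟩
    simp only [dotProduct, mulVec_diagonal, Fin.sum_univ_succ, cons_val_zero, cons_val_succ,
      Fin.succ_zero_eq_one, Fin.succ_one_eq_two, Pi.zero_apply, mul_zero, Finset.sum_const_zero,
      add_zero]
    linear_combination h

theorem HasDisc.exists_cong_orthSum {m : ℕ} {A : Matrix (Fin (m + 3)) (Fin (m + 3)) F} {D c : F}
    (hA : HasDisc A D) (hDc : ¬IsSquare (-D * c)) :
    ∃ B, HasDisc B (D * c) ∧ Cong A (orthSum B c) := by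
  have hc : c ≠ 0 := right_ne_zero_of_mul fun h => hDc (h ▸ IsSquare.zero)
  obtain ⟨B, hB⟩ := OrthPair.exists_cong_orthSum hA.1 hc (hA.exists_dotProduct_mulVec_eq hDc)
  exact ⟨B, (hasDisc_orthSum_iff hc).1 (hA.cong hB), hB⟩

theorem exists_cong_classes_binary {D : F} (hD : ¬IsSquare (-D)) :
    ∃ Q₁ Q₂ : Matrix (Fin 2) (Fin 2) F, HasDisc Q₁ D ∧ HasDisc Q₂ D ∧ ¬Cong Q₁ Q₂ ∧
      ∀ A, HasDisc A D → Cong Q₁ A ∨ Cong Q₂ A := by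
  have hD0 : -D ≠ 0 := fun h => hD (h ▸ IsSquare.zero)
  obtain ⟨c, hc, hnc⟩ := HilbertField.exists_not_isNorm (-D) hD
  refine ⟨binary 1 D, binary c D, hasDisc_binary one_ne_zero, hasDisc_binary hc, fun h => ?_,
    fun A hA => ?_⟩
  · rw [← one_mul c, cong_binary_iff_isNorm one_ne_zero hc] at h
    exact hnc h
  obtain ⟨a, ha, hAa⟩ := hA.exists_cong_binary HilbertField.two_ne_zero (neg_ne_zero.1 hD0)
  by_cases hna : IsNorm (-D) a
  · have h := (cong_binary_iff_isNorm one_ne_zero ha).2 hna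
    rw [one_mul] at h
    exact .inl (h.trans hAa.symm)
  · have hac : a / c = c * a * (c⁻¹ * c⁻¹) := by field_simp
    have hnac : IsNorm (-D) (a / c) := hac ▸
      (isNorm_mul_of_not_isNorm hD0 hc ha hnc hna).mul (isNorm_mul_self (-D) (inv_ne_zero hc))
    have h := (cong_binary_iff_isNorm hc hnac.1).2 hnac
    rw [mul_div_cancel₀ a hc] at h
    exact .inr (h.trans hAa.symm)

theorem exists_cong_classes {m : ℕ} {D : F} (hD : D ≠ 0) (hm : 1 ≤ m ∨ ¬IsSquare (-D)) :
    ∃ Q₁ Q₂ : Matrix (Fin (m + 2)) (Fin (m + 2)) F, HasDisc Q₁ D ∧ HasDisc Q₂ D ∧ ¬Cong Q₁ Q₂ ∧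
      ∀ A, HasDisc A D → Cong Q₁ A ∨ Cong Q₂ A := by
  induction m generalizing D with
  | zero => exact exists_cong_classes_binary (hm.resolve_left (by simp))
  | succ m ih =>
    obtain ⟨c, hc, hDc, -⟩ :=
      HilbertField.exists_not_isSquare_mul (-D) (-D) (neg_ne_zero.2 hD) (neg_ne_zero.2 hD)
    obtain ⟨Q₁, Q₂, hQ₁, hQ₂, hne, hQ⟩ :=
      ih (mul_ne_zero hD hc) (.inr (by rwa [← neg_mul]))
    refine ⟨orthSum Q₁ c, orthSum Q₂ c, (hasDisc_orthSum_iff hc).2 hQ₁,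
      (hasDisc_orthSum_iff hc).2 hQ₂, fun h => hne ?_, fun A hA => ?_⟩
    · exact h.of_orthSum HilbertField.two_ne_zero (hQ₂.det_ne_zero (mul_ne_zero hD hc))
    · obtain ⟨B, hB, hAB⟩ := hA.exists_cong_orthSum hDc
      exact (hQ B hB).imp (fun h => (h.orthSum c).trans hAB.symm)
        fun h => (h.orthSum c).trans hAB.symm

theorem HasDisc.cong_map_binary {E : Type*} [Field E] (f : F →+* E) {θ : F} (hθ : ¬IsSquare θ)
    (hfθ : IsSquare (f θ)) {A A' : Matrix (Fin 2) (Fin 2) F} {D D' : F} (hA : HasDisc A D)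
    (hA' : HasDisc A' D') (hD : D ≠ 0) (hD' : D' ≠ 0) {e : E} (hDD' : f D' = f D * (e * e)) :
    Cong (A.map f) (A'.map f) := by
  have h2 : (2 : F) ≠ 0 := HilbertField.two_ne_zero
  obtain ⟨a, ha, hAa⟩ := hA.exists_cong_binary h2 hD
  obtain ⟨a', ha', hAa'⟩ := hA'.exists_cong_binary h2 hD'
  have he : e ≠ 0 := by
    rintro rfl
    simp [hD'] at hDD'
  have hnorm : IsNorm (-f D) (f (a' / a)) :=
    map_neg f D ▸ isNorm_map f hθ hfθ (neg_ne_zero.2 hD) (div_ne_zero ha' ha)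
  have hscale := (cong_binary_iff_isNorm ((map_ne_zero f).2 ha) hnorm.1).2 hnorm
  rw [← map_mul, mul_div_cancel₀ _ ha] at hscale
  have hcong := hscale.trans (cong_binary_mul_self _ _ he)
  rw [← hDD', ← map_binary, ← map_binary] at hcong
  exact (hAa.map f).trans (hcong.trans (hAa'.map f).symm)

theorem HasDisc.cong_map {E : Type*} [Field E] (f : F →+* E) {θ : F} (hθ : ¬IsSquare θ)
    (hfθ : IsSquare (f θ)) {m : ℕ} {A A' : Matrix (Fin (m + 2)) (Fin (m + 2)) F} {D D' : F}
    (hA : HasDisc A D) (hA' : HasDisc A' D') (hD : D ≠ 0) (hD' : D' ≠ 0) {e : E}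
    (hDD' : f D' = f D * (e * e)) : Cong (A.map f) (A'.map f) := by
  induction m generalizing D D' with
  | zero => exact hA.cong_map_binary f hθ hfθ hA' hD hD' hDD'
  | succ m ih =>
    obtain ⟨c, hc, hDc, hDc'⟩ :=
      HilbertField.exists_not_isSquare_mul (-D) (-D') (neg_ne_zero.2 hD) (neg_ne_zero.2 hD')
    obtain ⟨B, hB, hAB⟩ := hA.exists_cong_orthSum hDc
    obtain ⟨B', hB', hAB'⟩ := hA'.exists_cong_orthSum hDc'
    have h := (ih hB hB' (mul_ne_zero hD hc) (mul_ne_zero hD' hc)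
      (by rw [map_mul, map_mul, hDD']; ring)).orthSum (f c)
    rw [← map_orthSum, ← map_orthSum] at h
    exact (hAB.map f).trans (h.trans (hAB'.map f).symm)

end Classification

section Isometry

variable {F : Type*} [Field F] {n : ℕ}

theorem det_mul_self_eq_one_of_transpose_mul_mul_eq {J g : Matrix (Fin n) (Fin n) F}
    (hJ : J.det ≠ 0) (hg : gᵀ * J * g = J) : g.det * g.det = 1 := by
  have hdet := congrArg det hg
  rw [det_mul, det_mul, det_transpose] at hdet
  exact mul_left_cancel₀ hJ (by linear_combination hdet)

theorem exists_isometry_det_eq_neg_one (h2 : (2 : F) ≠ 0)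
    {J : Matrix (Fin (n + 1)) (Fin (n + 1)) F} (hJ : J.IsSymm) :
    ∃ r : Matrix (Fin (n + 1)) (Fin (n + 1)) F, rᵀ * J * r = J ∧ r.det = -1 := by
  obtain ⟨d, hd⟩ := exists_cong_diagonal h2 hJ
  obtain ⟨⟨k, l, hkl, hlk⟩, hk⟩ := hd.symm
  obtain rfl : kᵀ * diagonal d * k = J := hk
  let s : Matrix (Fin (n + 1)) (Fin (n + 1)) F := diagonal (Fin.cons (-1) 1)
  have hs : sᵀ * diagonal d * s = diagonal d := by
    simp only [s, diagonal_transpose, diagonal_mul_diagonal]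
    congr 1
    ext i
    cases i using Fin.cases <;> simp
  have hs_det : s.det = -1 := by simp [s, Fin.prod_univ_succ]
  refine ⟨l * s * k, ?_, ?_⟩
  · calc (l * s * k)ᵀ * (kᵀ * diagonal d * k) * (l * s * k)
        = kᵀ * (sᵀ * ((k * l)ᵀ * diagonal d * (k * l)) * s) * k := by
          simp only [transpose_mul, Matrix.mul_assoc]
      _ = kᵀ * diagonal d * k := by
          rw [hkl, transpose_one, Matrix.one_mul, Matrix.mul_one, hs]
  · rw [det_mul_right_comm, hlk, Matrix.one_mul, hs_det]

end Isometry

section Descent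

variable {F : Type*} {E : Type} [Field F] [Field E] {f : F →+* E} {σ : E →+* E} {n : ℕ}

theorem map_fixed_iff_exists_map_eq (hfix : ∀ x, σ x = x ↔ x ∈ f.range)
    {h : Matrix (Fin n) (Fin n) E} : h.map σ = h ↔ ∃ k : Matrix (Fin n) (Fin n) F, k.map f = h := by
  refine ⟨fun hh => ?_, ?_⟩
  · choose k hk using fun a b => (hfix _).1 (congrFun₂ hh a b)
    exact ⟨k, Matrix.ext hk⟩
  · rintro ⟨k, rfl⟩
    ext a b
    exact (hfix _).2 ⟨k a b, rfl⟩

-- For every `a` the matrix `h = a + σ(a) x` satisfies `x σ(h) = h`; it is invertible as soon as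
-- `-a / σ(a)` is not an eigenvalue of `x`.
theorem exists_isUnit_mul_map_eq [Infinite F] (hσ : Function.Involutive σ)
    (hf : ∀ y, σ (f y) = f y) {i : E} (hi : σ i ≠ i) {x : Matrix (Fin n) (Fin n) E}
    (hx : x * x.map σ = 1) : ∃ h : Matrix (Fin n) (Fin n) E, IsUnit h ∧ x * h.map σ = h := by
  have hne (t : F) : f t + σ i ≠ 0 := fun h => by
    have h' : f t + i = 0 := (map_eq_zero σ).1 (by rw [map_add, hf, h])
    exact hi (add_left_cancel (h.trans h'.symm))
  have hinj : Function.Injective fun t : F => -(f t + i) / (f t + σ i) := fun s t hst => by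
    rw [div_eq_div_iff (hne s) (hne t)] at hst
    have h : (f s - f t) * (σ i - i) = 0 := by linear_combination -hst
    exact f.injective (sub_eq_zero.1 ((mul_eq_zero.1 h).resolve_right (sub_ne_zero.2 hi)))
  classical
  obtain ⟨_, ⟨t, rfl⟩, ht⟩ :=
    (Set.infinite_range_of_injective hinj).exists_notMem_finset x.charpoly.roots.toFinset
  rw [Multiset.mem_toFinset, Polynomial.mem_roots x.charpoly_monic.ne_zero, Polynomial.IsRoot,
    eval_charpoly] at ht
  let a : E := f t + i
  have hσa : σ a = f t + σ i := by rw [map_add, hf]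
  refine ⟨a • 1 + σ a • x, ?_, ?_⟩
  · have hscalar : a • (1 : Matrix (Fin n) (Fin n) E) + σ a • x =
        (-σ a) • (scalar (Fin n) (-a / σ a) - x) := by
      have ha : -σ a * (-a / σ a) = a := by
        have : σ a ≠ 0 := hσa ▸ hne t
        field_simp
      rw [smul_sub, scalar_apply, ← smul_one_eq_diagonal, smul_smul, ha, neg_smul, sub_neg_eq_add]
    rw [isUnit_iff_isUnit_det, isUnit_iff_ne_zero, hscalar, det_smul, hσa]
    exact mul_ne_zero (pow_ne_zero _ (neg_ne_zero.2 (hne t))) ht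
  · have hmap : (a • (1 : Matrix (Fin n) (Fin n) E) + σ a • x).map σ = σ a • 1 + a • x.map σ := by
      rw [Matrix.map_add _ (map_add σ), Matrix.map_smul' _ _ _ (map_mul σ),
        Matrix.map_smul' _ _ _ (map_mul σ), hσ a, Matrix.map_one _ (map_zero σ) (map_one σ)]
    rw [hmap, Matrix.mul_add, Matrix.mul_smul, Matrix.mul_smul, hx, Matrix.mul_one, add_comm]

end Descent

section Frame

variable {F : Type*} {E : Type} [Field F] [Field E] {f : F →+* E} {σ : E →+* E} {n : ℕ}
  {j x h x' h' : Matrix (Fin n) (Fin n) E} {A A' : Matrix (Fin n) (Fin n) F}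

/-- The columns of `h` form a basis of `Eⁿ` fixed by the semilinear map `v ↦ x σ(v)`, and the form
`j` has Gram matrix `A` over `F` in this basis. For `x ∈ X^j` the vectors fixed by `v ↦ x σ(v)` are
an `F`-form of the quadratic space `(Eⁿ, j)`, and `A` is its Gram matrix. -/
structure IsFrame (f : F →+* E) (σ : E →+* E) (j x h : Matrix (Fin n) (Fin n) E)
    (A : Matrix (Fin n) (Fin n) F) : Prop where
  isUnit : IsUnit h
  mul_map : x * h.map σ = h
  gram : hᵀ * j * h = A.map f

theorem IsFrame.isUnit_map (hx : IsFrame f σ j x h A) : IsUnit (h.map σ) :=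
  hx.isUnit.map σ.mapMatrix

theorem IsFrame.det_ne_zero (hx : IsFrame f σ j x h A) : h.det ≠ 0 :=
  ((isUnit_iff_isUnit_det h).1 hx.isUnit).ne_zero

theorem IsFrame.det_mul_map_det (hx : IsFrame f σ j x h A) : x.det * σ h.det = h.det := by
  rw [σ.map_det, RingHom.mapMatrix_apply, ← det_mul, hx.mul_map]

theorem IsFrame.det_mul_det_mul_det (hx : IsFrame f σ j x h A) :
    j.det * (h.det * h.det) = f A.det := by
  rw [f.map_det, RingHom.mapMatrix_apply, ← hx.gram, det_mul, det_mul, det_transpose]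
  ring

theorem IsFrame.isSymm (hx : IsFrame f σ j x h A) (hj : j.IsSymm) : A.IsSymm := by
  apply map_injective f.injective
  simp only [transpose_map, ← hx.gram, transpose_mul, transpose_transpose, hj.eq, Matrix.mul_assoc]

theorem IsFrame.mul_map_right (hfix : ∀ x, σ x = x ↔ x ∈ f.range) (hx : IsFrame f σ j x h A)
    {l : Matrix (Fin n) (Fin n) F} (hl : IsUnit l) :
    IsFrame f σ j x (h * l.map f) (lᵀ * A * l) where
  isUnit := hx.isUnit.mul (hl.map f.mapMatrix)
  mul_map := by
    rw [Matrix.map_mul, (map_fixed_iff_exists_map_eq hfix).2 ⟨l, rfl⟩, ← Matrix.mul_assoc,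
      hx.mul_map]
  gram := by
    simp only [Matrix.map_mul, transpose_map, ← hx.gram, transpose_mul, Matrix.mul_assoc]

theorem isFrame_mul_map_inv (hh : IsUnit h) (hgram : hᵀ * j * h = A.map f) :
    IsFrame f σ j (h * (h.map σ)⁻¹) h A where
  isUnit := hh
  mul_map := nonsing_inv_mul_cancel_right _ _ ((isUnit_iff_isUnit_det _).1 (hh.map σ.mapMatrix))
  gram := hgram

theorem exists_isFrame [Infinite F] (hσ : Function.Involutive σ)
    (hfix : ∀ x, σ x = x ↔ x ∈ f.range) {i : E} (hi : σ i ≠ i) (hj : j.map σ = j)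
    (hx : Xj σ j x) : ∃ h A, IsFrame f σ j x h A := by
  obtain ⟨h, hh, hxh⟩ := exists_isUnit_mul_map_eq hσ (fun y => (hfix _).2 ⟨y, rfl⟩) hi hx.2
  have hfixed : (hᵀ * j * h).map σ = hᵀ * j * h :=
    calc (hᵀ * j * h).map σ = (h.map σ)ᵀ * (xᵀ * j * x) * h.map σ := by
          rw [Matrix.map_mul, Matrix.map_mul, hj, transpose_map, hx.1.2]
      _ = (x * h.map σ)ᵀ * j * (x * h.map σ) := by
          simp only [transpose_mul, Matrix.mul_assoc]
      _ = hᵀ * j * h := by rw [hxh]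
  obtain ⟨A, hA⟩ := (map_fixed_iff_exists_map_eq hfix).1 hfixed
  exact ⟨h, A, hh, hxh, hA.symm⟩

theorem IsFrame.xj (hσ : Function.Involutive σ) (hfix : ∀ x, σ x = x ↔ x ∈ f.range)
    (hj : j.map σ = j) (hx : IsFrame f σ j x h A) : Xj σ j x := by
  have hxσ : x * x.map σ = 1 := by
    have hσh : (h.map σ).map σ = h := Matrix.ext fun a b => hσ (h a b)
    apply hx.isUnit.mul_right_cancel
    calc x * x.map σ * h = x * (x * h.map σ).map σ := by
          rw [Matrix.map_mul, hσh, Matrix.mul_assoc]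
      _ = 1 * h := by rw [hx.mul_map, hx.mul_map, Matrix.one_mul]
  refine ⟨⟨.of_mul_eq_one _ hxσ, ?_⟩, hxσ⟩
  apply hx.isUnit_map.mul_right_cancel
  apply ((isUnit_transpose _).2 hx.isUnit_map).mul_left_cancel
  calc (h.map σ)ᵀ * (xᵀ * j * x * h.map σ) = (x * h.map σ)ᵀ * j * (x * h.map σ) := by
        simp only [transpose_mul, Matrix.mul_assoc]
    _ = (A.map f).map σ := by
        rw [hx.mul_map, hx.gram, (map_fixed_iff_exists_map_eq hfix).2 ⟨A, rfl⟩]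
    _ = (h.map σ)ᵀ * (j * h.map σ) := by
        rw [← hx.gram, Matrix.map_mul, Matrix.map_mul, hj, transpose_map, Matrix.mul_assoc]

theorem IsFrame.twisted_conj {g : Matrix (Fin n) (Fin n) E} (hg : Gj j g)
    (hx : IsFrame f σ j x h A) : IsFrame f σ j (g * x * (g.map σ)⁻¹) (g * h) A where
  isUnit := hg.1.mul hx.isUnit
  mul_map := by
    have hgσ : IsUnit (g.map σ).det := (isUnit_iff_isUnit_det _).1 (hg.1.map σ.mapMatrix)
    rw [Matrix.map_mul, ← Matrix.mul_assoc, nonsing_inv_mul_cancel_right _ _ hgσ, Matrix.mul_assoc,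
      hx.mul_map]
  gram :=
    calc (g * h)ᵀ * j * (g * h) = hᵀ * (gᵀ * j * g) * h := by
          simp only [transpose_mul, Matrix.mul_assoc]
      _ = A.map f := by rw [hg.2, hx.gram]

theorem IsFrame.cong (hfix : ∀ x, σ x = x ↔ x ∈ f.range) (hx : IsFrame f σ j x h A)
    (hx' : IsFrame f σ j x h' A') : Cong A A' := by
  obtain ⟨l, rfl⟩ : ∃ l, h * l = h' :=
    ⟨_, mul_nonsing_inv_cancel_left _ _ ((isUnit_iff_isUnit_det _).1 hx.isUnit)⟩
  have hlσ : l.map σ = l := by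
    apply hx.isUnit.mul_left_cancel
    calc h * l.map σ = x * (h * l).map σ := by
          rw [Matrix.map_mul, ← Matrix.mul_assoc, hx.mul_map]
      _ = h * l := hx'.mul_map
  obtain ⟨k, rfl⟩ := (map_fixed_iff_exists_map_eq hfix).1 hlσ
  have hk : k.det ≠ 0 := by
    have hdet := hx'.det_ne_zero
    rw [det_mul, ← f.mapMatrix_apply, ← f.map_det] at hdet
    exact (map_ne_zero f).1 (right_ne_zero_of_mul hdet)
  obtain rfl : kᵀ * A * k = A' := by
    apply map_injective f.injective
    simp only [← hx'.gram, Matrix.map_mul, transpose_map, ← hx.gram, transpose_mul,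
      Matrix.mul_assoc]
  exact cong_of_det_ne_zero A hk

theorem IsFrame.cong_of_orbSG (hfix : ∀ x, σ x = x ↔ x ∈ f.range) (hx : IsFrame f σ j x h A)
    (hx' : IsFrame f σ j x' h' A') (horb : orbSG σ j x x') : Cong A A' := by
  obtain ⟨g, hg, -, rfl⟩ := horb
  exact (hx.twisted_conj hg).cong hfix hx'

theorem IsFrame.orbSG_of_det_eq (hx : IsFrame f σ j x h A) (hx' : IsFrame f σ j x' h' A)
    (hdet : h.det = h'.det) : orbSG σ j x x' := by
  have hh : IsUnit h.det := (isUnit_iff_isUnit_det _).1 hx.isUnit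
  have hgh : h' * h⁻¹ * h = h' := nonsing_inv_mul_cancel_right _ _ hh
  have hg : IsUnit (h' * h⁻¹) := hx'.isUnit.mul (isUnit_nonsing_inv_iff.2 hx.isUnit)
  have hgσ : IsUnit ((h' * h⁻¹).map σ) := hg.map σ.mapMatrix
  refine ⟨h' * h⁻¹, ⟨hg, ?_⟩, ?_, ?_⟩
  · apply hx.isUnit.mul_right_cancel
    apply ((isUnit_transpose _).2 hx.isUnit).mul_left_cancel
    calc hᵀ * ((h' * h⁻¹)ᵀ * j * (h' * h⁻¹) * h) = (h' * h⁻¹ * h)ᵀ * j * (h' * h⁻¹ * h) := by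
          simp only [transpose_mul, Matrix.mul_assoc]
      _ = hᵀ * (j * h) := by rw [hgh, hx'.gram, ← hx.gram, Matrix.mul_assoc]
  · rw [det_mul, ← hdet, ← det_mul, mul_nonsing_inv _ hh, det_one]
  · apply hgσ.mul_right_cancel
    rw [nonsing_inv_mul_cancel_right _ _ ((isUnit_iff_isUnit_det _).1 hgσ)]
    apply hx.isUnit_map.mul_right_cancel
    rw [Matrix.mul_assoc, ← Matrix.map_mul, hgh, hx'.mul_map, Matrix.mul_assoc, hx.mul_map, hgh]

-- An isometry between the Gram matrices only gives an element of `O(j)`; a reflection corrects its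
-- determinant.
theorem IsFrame.orbSG_of_cong (h2 : (2 : F) ≠ 0) (hfix : ∀ x, σ x = x ↔ x ∈ f.range)
    {j x h x' h' : Matrix (Fin (n + 1)) (Fin (n + 1)) E}
    {A A' : Matrix (Fin (n + 1)) (Fin (n + 1)) F} (hj : j.IsSymm) (hj0 : j.det ≠ 0)
    (hx : IsFrame f σ j x h A) (hx' : IsFrame f σ j x' h' A') (hA : Cong A A') :
    orbSG σ j x x' := by
  obtain ⟨k, rfl⟩ := hA.symm
  have hy := hx'.mul_map_right hfix k.isUnit
  have hdet : h.det * h.det = (h' * (k : Matrix _ _ F).map f).det * (h' * k.1.map f).det :=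
    mul_left_cancel₀ hj0 (hx.det_mul_det_mul_det.trans hy.det_mul_det_mul_det.symm)
  rcases mul_self_eq_mul_self_iff.1 hdet with hdet | hdet
  · exact hx.orbSG_of_det_eq hy hdet
  · obtain ⟨r, hr, hr_det⟩ := exists_isometry_det_eq_neg_one h2 (hx.isSymm hj)
    have hr_unit : IsUnit r := (isUnit_iff_isUnit_det r).2 (by simp [hr_det])
    have hz := hy.mul_map_right hfix hr_unit
    rw [hr] at hz
    refine hx.orbSG_of_det_eq hz ?_
    rw [hdet, det_mul _ (r.map f), ← f.mapMatrix_apply r, ← f.map_det, hr_det, map_neg, map_one,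
      mul_neg_one]

end Frame

section Orbits

variable {F : Type*} {E : Type} [Field F] [Field E] {f : F →+* E} {σ : E →+* E}

theorem exists_not_isSquare_isSquare_map (h2 : (2 : F) ≠ 0) (hσ : Function.Involutive σ)
    (hfix : ∀ x, σ x = x ↔ x ∈ f.range) {i : E} (hi : σ i ≠ i) :
    ∃ θ, ¬IsSquare θ ∧ IsSquare (f θ) := by
  let δ := i - σ i
  have hδ : σ δ = -δ := by rw [map_sub, hσ i, neg_sub]
  obtain ⟨θ, hθ⟩ := (hfix (δ * δ)).1 (by rw [map_mul, hδ, neg_mul_neg])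
  refine ⟨θ, ?_, δ, hθ⟩
  rintro ⟨r, rfl⟩
  have hδ_mem : δ ∈ f.range := by
    rcases mul_self_eq_mul_self_iff.1 (hθ.symm.trans (f.map_mul r r)) with h | h
    · exact ⟨r, h.symm⟩
    · exact ⟨-r, by rw [map_neg, h]⟩
  have h2δ : f 2 * δ = 0 := by
    rw [map_ofNat]
    linear_combination ((hfix δ).2 hδ_mem).symm.trans hδ
  have hδ0 : δ = 0 := (mul_eq_zero.1 h2δ).resolve_left ((map_ne_zero f).2 h2)
  exact hi (sub_eq_zero.1 hδ0).symm

-- Since `det x · σ(det h) = det h`, both conditions say that `det h` lies on the line `F e`.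
theorem IsFrame.det_eq_iff_hasDisc (hfix : ∀ x, σ x = x ↔ x ∈ f.range) {n : ℕ}
    {j x h : Matrix (Fin n) (Fin n) E} {A : Matrix (Fin n) (Fin n) F} (hj : j.IsSymm)
    (hj0 : j.det ≠ 0) (hx : IsFrame f σ j x h A) {e ε : E} (he : e ≠ 0) (hσe : σ e = ε * e)
    (hε : ε * ε = 1) {D : F} (hD : f D = j.det * (e * e)) :
    x.det = ε ↔ HasDisc A D := by
  have hdet : x.det * σ h.det = h.det := hx.det_mul_map_det
  have hdetA : j.det * (h.det * h.det) = f A.det := hx.det_mul_det_mul_det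
  constructor
  · rintro rfl
    have hσh : σ h.det = x.det * h.det := by linear_combination x.det * hdet - σ h.det * hε
    have hx0 : x.det ≠ 0 := left_ne_zero_of_mul_eq_one hε
    obtain ⟨r, hr⟩ := (hfix (h.det / e)).1 (by
      rw [map_div₀, hσh, hσe, mul_div_mul_left _ _ hx0])
    have hhr : h.det = f r * e := by rw [hr, div_mul_cancel₀ _ he]
    refine ⟨hx.isSymm hj, r, ?_, f.injective ?_⟩
    · rintro rfl
      exact hx.det_ne_zero (by rw [hhr, map_zero, zero_mul])
    · rw [← hdetA, hhr, map_mul, map_mul, hD]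
      ring
  · rintro ⟨-, r, -, hr⟩
    have hσr : σ (f r) = f r := (hfix _).2 ⟨r, rfl⟩
    have hsq : h.det * h.det = (f r * e) * (f r * e) := by
      rw [hr, map_mul, map_mul, hD] at hdetA
      exact mul_left_cancel₀ hj0 (by linear_combination hdetA)
    have hσh : σ h.det = ε * h.det := by
      rcases mul_self_eq_mul_self_iff.1 hsq with hh | hh
      · rw [hh, map_mul, hσr, hσe]
        ring
      · rw [hh, map_neg, map_mul, hσr, hσe]
        ring
    rw [hσh] at hdet
    exact mul_right_cancel₀ hx.det_ne_zero (by linear_combination ε * hdet - x.det * h.det * hε)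

theorem exists_map_eq_det_mul (hfix : ∀ x, σ x = x ↔ x ∈ f.range) {n : ℕ}
    {j : Matrix (Fin n) (Fin n) E} (hjσ : j.map σ = j) (hj0 : j.det ≠ 0) {e : E} (he : e ≠ 0)
    (hσe : σ (e * e) = e * e) : ∃ D, D ≠ 0 ∧ f D = j.det * (e * e) ∧
      (IsSquare (-D) → ∃ c, σ c = c ∧ c ≠ 0 ∧ j.det = -(e * e * (c * c))) := by
  have hdet : σ j.det = j.det := by rw [σ.map_det, RingHom.mapMatrix_apply, hjσ]
  have hee : e * e ≠ 0 := mul_ne_zero he he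
  obtain ⟨D, hD⟩ := (hfix (j.det * (e * e))).1 (by rw [map_mul, hdet, hσe])
  have hD0 : f D ≠ 0 := by
    rw [hD]
    exact mul_ne_zero hj0 hee
  refine ⟨D, (map_ne_zero f).1 hD0, hD, ?_⟩
  rintro ⟨r, hr⟩
  have hr_map : -(j.det * (e * e)) = f r * f r := by rw [← hD, ← map_neg, hr, map_mul]
  have hr0 : f r ≠ 0 := fun h => hD0 (by rw [← neg_neg D, hr, map_neg, map_mul, h]; simp)
  refine ⟨f r / (e * e), ?_, div_ne_zero hr0 hee, ?_⟩
  · rw [map_div₀, hσe, (hfix _).2 ⟨r, rfl⟩]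
  · field_simp
    linear_combination -hr_map

theorem exists_isFrame_of_hasDisc [HilbertField F] (hσ : Function.Involutive σ)
    (hfix : ∀ x, σ x = x ↔ x ∈ f.range) {i : E} (hi : σ i ≠ i) {m : ℕ}
    {j : Matrix (Fin (m + 2)) (Fin (m + 2)) E} (hjσ : j.map σ = j) (hj : j.IsSymm)
    (hj0 : j.det ≠ 0) {D : F} (hD : D ≠ 0) {e : E} (hDe : f D = j.det * (e * e))
    {Q : Matrix (Fin (m + 2)) (Fin (m + 2)) F} (hQ : HasDisc Q D) :
    ∃ x h, IsFrame f σ j x h Q := by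
  obtain ⟨θ, hθ, hfθ⟩ :=
    exists_not_isSquare_isSquare_map HilbertField.two_ne_zero hσ hfix hi
  obtain ⟨J, rfl⟩ := (map_fixed_iff_exists_map_eq hfix).1 hjσ
  have hJ : J.IsSymm := map_injective f.injective hj
  rw [← f.mapMatrix_apply, ← f.map_det] at hj0 hDe
  obtain ⟨k, hk⟩ := HasDisc.cong_map f hθ hfθ (D := J.det)
    ⟨hJ, 1, one_ne_zero, by rw [mul_one, mul_one]⟩ hQ ((map_ne_zero f).1 hj0) hD hDe
  exact ⟨_, k, isFrame_mul_map_inv k.isUnit hk⟩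

theorem exists_orbits [HilbertField F] [Infinite F] (hσ : Function.Involutive σ)
    (hfix : ∀ x, σ x = x ↔ x ∈ f.range) {i : E} (hi : σ i ≠ i) {m : ℕ}
    {j : Matrix (Fin (m + 2)) (Fin (m + 2)) E} (hjσ : j.map σ = j) (hj : j.IsSymm)
    (hj0 : j.det ≠ 0) {e ε : E} (he : e ≠ 0) (hσe : σ e = ε * e) (hε : ε * ε = 1)
    (hm : 1 ≤ m ∨ ¬∃ c, σ c = c ∧ c ≠ 0 ∧ j.det = -(e * e * (c * c))) :
    ∃ x₁ x₂, (Xj σ j x₁ ∧ x₁.det = ε) ∧ (Xj σ j x₂ ∧ x₂.det = ε) ∧ ¬orbSG σ j x₁ x₂ ∧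
      ∀ x, Xj σ j x → x.det = ε → orbSG σ j x₁ x ∨ orbSG σ j x₂ x := by
  have hσee : σ (e * e) = e * e := by
    rw [map_mul, hσe]
    linear_combination e * e * hε
  obtain ⟨D, hD, hDe, hsq⟩ := exists_map_eq_det_mul hfix hjσ hj0 he hσee
  obtain ⟨Q₁, Q₂, hQ₁, hQ₂, hne, hQ⟩ := exists_cong_classes hD (hm.imp_right (mt hsq))
  obtain ⟨x₁, h₁, hx₁⟩ := exists_isFrame_of_hasDisc hσ hfix hi hjσ hj hj0 hD hDe hQ₁
  obtain ⟨x₂, h₂, hx₂⟩ := exists_isFrame_of_hasDisc hσ hfix hi hjσ hj hj0 hD hDe hQ₂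
  have hdet {x h A} (hx : IsFrame f σ j x h A) : x.det = ε ↔ HasDisc A D :=
    hx.det_eq_iff_hasDisc hfix hj hj0 he hσe hε hDe
  refine ⟨x₁, x₂, ⟨hx₁.xj hσ hfix hjσ, (hdet hx₁).2 hQ₁⟩, ⟨hx₂.xj hσ hfix hjσ, (hdet hx₂).2 hQ₂⟩,
    fun h => hne (hx₁.cong_of_orbSG hfix hx₂ h), fun x hx hxε => ?_⟩
  obtain ⟨h, A, hframe⟩ := exists_isFrame hσ hfix hi hjσ hx
  have h2 : (2 : F) ≠ 0 := HilbertField.two_ne_zero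
  exact (hQ A ((hdet hframe).1 hxε)).imp (hx₁.orbSG_of_cong h2 hfix hj hj0 hframe)
    (hx₂.orbSG_of_cong h2 hfix hj hj0 hframe)

end Orbits

section Involution

variable {k E : Type*} [Field k] [Field E] [Algebra k E]

theorem mem_fixedField_zpowers_iff {σ : E ≃ₐ[k] E} {x : E} :
    x ∈ IntermediateField.fixedField (Subgroup.zpowers σ) ↔ σ x = x := by
  rw [IntermediateField.mem_fixedField_iff]
  refine ⟨fun h => h σ (Subgroup.mem_zpowers σ), fun h g hg => ?_⟩
  have hle : Subgroup.zpowers σ ≤ MulAction.stabilizer (E ≃ₐ[k] E) x := by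
    rwa [Subgroup.zpowers_le]
  exact hle hg

end Involution

theorem exists_orbits_of_localField {k : Type*} [NontriviallyNormedField k] [ProperSpace k]
    [IsUltrametricDist k] (h2 : (2 : k) ≠ 0) {E : Type} [Field E] [Algebra k E]
    [FiniteDimensional k E] {σ : E ≃ₐ[k] E} (hσ : σ * σ = 1) {i : E} (hi : σ i ≠ i) {n : ℕ}
    {j : Matrix (Fin n) (Fin n) E} (hjσ : ∀ a b, σ (j a b) = j a b) (hjU : IsUnit j)
    (hj : jᵀ = j) {e ε : E} (he : e ≠ 0) (hσe : σ e = ε * e) (hε : ε * ε = 1)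
    (hn : 3 ≤ n ∨ (n = 2 ∧ ¬∃ c, σ c = c ∧ c ≠ 0 ∧ j.det = -(e * e * (c * c)))) :
    ∃ x₁ x₂, (Xj σ j x₁ ∧ x₁.det = ε) ∧ (Xj σ j x₂ ∧ x₂.det = ε) ∧ ¬orbSG σ j x₁ x₂ ∧
      ∀ x, Xj σ j x → x.det = ε → orbSG σ j x₁ x ∨ orbSG σ j x₂ x := by
  obtain ⟨m, rfl⟩ : ∃ m, n = m + 2 := ⟨n - 2, by lia⟩
  let F := IntermediateField.fixedField (Subgroup.zpowers σ)
  have : HilbertField F := .of_finiteDimensional k F h2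
  have : Infinite F :=
    have := NontriviallyNormedField.infinite k
    .of_injective _ (algebraMap k F).injective
  have hfix (x : E) : (σ : E →+* E) x = x ↔ x ∈ (algebraMap F E).range :=
    mem_fixedField_zpowers_iff.symm.trans ⟨fun hx => ⟨⟨x, hx⟩, rfl⟩, by rintro ⟨y, rfl⟩; exact y.2⟩
  exact exists_orbits (σ := (σ : E →+* E)) (DFunLike.congr_fun hσ) hfix hi (Matrix.ext hjσ) hj
    ((isUnit_iff_isUnit_det j).1 hjU).ne_zero he hσe hε (hn.imp (by lia) And.right)

end OrthPair

theorem stmt_13_general {k : Type*} [NontriviallyNormedField k] [ProperSpace k]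
    [IsUltrametricDist k] (h2 : (2 : k) ≠ 0) {E : Type} [Field E] [Algebra k E]
    [FiniteDimensional k E] (σ : E ≃ₐ[k] E) (hσ : σ * σ = 1) (ι : E) (hι : σ ι ≠ ι)
    (hιι : σ (ι * ι) = ι * ι) {n : ℕ} (j : Matrix (Fin n) (Fin n) E)
    (hjσ : ∀ a b, σ (j a b) = j a b) (hjU : IsUnit j) (hj : jᵀ = j) :
    ((3 ≤ n ∨ (n = 2 ∧ ¬ ∃ c, σ c = c ∧ c ≠ 0 ∧ j.det = -(c * c))) →
      ∃ x₁ x₂, SXj ⇑σ j x₁ ∧ SXj ⇑σ j x₂ ∧ ¬ orbSG ⇑σ j x₁ x₂ ∧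
        ∀ x, SXj ⇑σ j x → orbSG ⇑σ j x₁ x ∨ orbSG ⇑σ j x₂ x) ∧
    ((3 ≤ n ∨ (n = 2 ∧ ¬ ∃ c, σ c = c ∧ c ≠ 0 ∧ j.det = -(ι * ι * (c * c)))) →
      ∃ x₁ x₂, (Xj ⇑σ j x₁ ∧ x₁.det ≠ 1) ∧ (Xj ⇑σ j x₂ ∧ x₂.det ≠ 1) ∧
        ¬ orbSG ⇑σ j x₁ x₂ ∧
        ∀ x, Xj ⇑σ j x → x.det ≠ 1 → orbSG ⇑σ j x₁ x ∨ orbSG ⇑σ j x₂ x) := by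
  have hσι : σ ι = -1 * ι := by
    rw [map_mul] at hιι
    rw [neg_one_mul]
    exact (mul_self_eq_mul_self_iff.1 hιι).resolve_left hι
  have hι0 : ι ≠ 0 := fun h => hι (by rw [h, map_zero])
  have h2E : (2 : E) ≠ 0 := map_ofNat (algebraMap k E) 2 ▸ (map_ne_zero _).2 h2
  have hdet {x} (hx : Xj σ j x) : x.det ≠ 1 ↔ x.det = -1 :=
    have hxx := mul_self_eq_one_iff.1 <| det_mul_self_eq_one_of_transpose_mul_mul_eq
      ((isUnit_iff_isUnit_det j).1 hjU).ne_zero hx.1.2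
    ⟨hxx.resolve_left, fun h h' => h2E (by linear_combination h - h')⟩
  refine ⟨fun hn => ?_, fun hn => ?_⟩
  · obtain ⟨x₁, x₂, hx₁, hx₂, hne, hall⟩ := exists_orbits_of_localField h2 hσ hι hjσ hjU hj
      (one_ne_zero (α := E)) (by simp) (one_mul 1) (by simpa using hn)
    exact ⟨x₁, x₂, hx₁, hx₂, hne, fun x hx => hall x hx.1 hx.2⟩
  · obtain ⟨x₁, x₂, ⟨hx₁, hd₁⟩, ⟨hx₂, hd₂⟩, hne, hall⟩ :=
      exists_orbits_of_localField h2 hσ hι hjσ hjU hj hι0 hσι (by ring) hn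
    exact ⟨x₁, x₂, ⟨hx₁, (hdet hx₁).2 hd₁⟩, ⟨hx₂, (hdet hx₂).2 hd₂⟩, hne,
      fun x hx hx1 => hall x hx ((hdet hx).1 hx1)⟩

/-- In the orthogonal case: if `n ≥ 3`, or if `n = 2` and
`det j ∉ -F^{×2}`, then `SX^j` consists of exactly two `SG^j(E)`-orbits; and if `n ≥ 3`,
or if `n = 2` and `det j ∉ -ι²·F^{×2}`, then `X^j \ SX^j` consists of exactly two
`SG^j(E)`-orbits.  (`F` is the fixed field of `σ`, and `ι ∈ E \ F` satisfies `ι² ∈ F`.) -/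
theorem stmt_13 (p : ℕ) [Fact p.Prime]
    (E : Type) [Field E] [Algebra ℚ_[p] E] [FiniteDimensional ℚ_[p] E]
    (σ : E ≃ₐ[ℚ_[p]] E) (hσ1 : σ ≠ 1) (hσ2 : σ * σ = 1)
    (ι : E) (hι1 : σ ι ≠ ι) (hι2 : σ (ι * ι) = ι * ι)
    (n : ℕ) (hn : 1 ≤ n)
    (j : Matrix (Fin n) (Fin n) E)
    (hjF : ∀ a b, σ (j a b) = j a b) (hjU : IsUnit j) (hjsym : jᵀ = j) :
    -- exactly two orbits in SX^j
    ((3 ≤ n ∨ (n = 2 ∧ ¬ ∃ c, σ c = c ∧ c ≠ 0 ∧ j.det = -(c * c))) →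
      ∃ x₁ x₂, SXj ⇑σ j x₁ ∧ SXj ⇑σ j x₂ ∧ ¬ orbSG ⇑σ j x₁ x₂ ∧
        ∀ x, SXj ⇑σ j x → orbSG ⇑σ j x₁ x ∨ orbSG ⇑σ j x₂ x) ∧
    -- exactly two orbits in X^j \ SX^j
    ((3 ≤ n ∨ (n = 2 ∧ ¬ ∃ c, σ c = c ∧ c ≠ 0 ∧ j.det = -(ι * ι * (c * c)))) →
      ∃ x₁ x₂, (Xj ⇑σ j x₁ ∧ x₁.det ≠ 1) ∧ (Xj ⇑σ j x₂ ∧ x₂.det ≠ 1) ∧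
        ¬ orbSG ⇑σ j x₁ x₂ ∧
        ∀ x, Xj ⇑σ j x → x.det ≠ 1 → orbSG ⇑σ j x₁ x ∨ orbSG ⇑σ j x₂ x) :=
  stmt_13_general (k := ℚ_[p]) two_ne_zero σ hσ2 ι hι1 hι2 j hjF hjU hjsym
end

section
/- In the orthogonal case, let x ∈ X^j and let z ∈ GL_n(E) satisfy x = z·σ(z)^{-1}, and set y = transpose(z)·j·z (so y is an invertible symmetric matrix with entries in F). Then det y ∈ det j · F^{×2} if det x = 1, and det y ∈ ı²·det j · F^{×2} if det x = -1. -/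
open Matrix

open OrthPair

/-!
Since `x * σ(z) = z`, the determinant `δ` of `x` satisfies `δ * σ(det z) = det z`. If a unit `τ`
solves the same equation `δ * σ(τ) = τ`, then `c = τ⁻¹ * det z` is fixed by `σ`, and
`det y = det j * (det z)² = τ² * det j * c²`. For `δ = 1` take `τ = 1`; for `δ = -1` take `τ = ι`.
-/

lemma map_eq_self_of_mul_map_eq_self {M F : Type*} [Semigroup M] [FunLike F M M]
    [MulHomClass F M M] {σ : F} {δ τ c : M} (hτ_reg : IsLeftRegular τ)
    (hτ : δ * σ τ = τ) (hτc : δ * σ (τ * c) = τ * c) : σ c = c :=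
  hτ_reg <| calc
    τ * σ c = δ * σ (τ * c) := by rw [map_mul, ← mul_assoc, hτ]
    _ = τ * c := hτc

lemma map_eq_neg_of_map_mul_self_eq {R F : Type*} [NonUnitalNonAssocCommRing R] [NoZeroDivisors R]
    [FunLike F R R] [MulHomClass F R R] {σ : F} {a : R} (hne : σ a ≠ a) (hsq : σ (a * a) = a * a) :
    σ a = -a :=
  (mul_self_eq_mul_self_iff.1 ((map_mul σ a a).symm.trans hsq)).resolve_left hne

section CommRing

variable {R m : Type*} [CommRing R] [Fintype m] [DecidableEq m] (σ : R →+* R) {z : Matrix m m R}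

lemma det_transpose_mul_mul_self (j : Matrix m m R) :
    (zᵀ * j * z).det = j.det * (z.det * z.det) := by
  rw [det_mul, det_mul, det_transpose]
  ring

lemma det_mul_inv_map_mul_map_det (hz : IsUnit z) :
    (z * (z.map σ)⁻¹).det * σ z.det = z.det := by
  have hσz : IsUnit (z.map σ).det := (isUnit_iff_isUnit_det _).1 (hz.map σ.mapMatrix)
  calc (z * (z.map σ)⁻¹).det * σ z.det = (z * (z.map σ)⁻¹ * z.map σ).det := by
        rw [σ.map_det, RingHom.mapMatrix_apply, ← det_mul]
    _ = z.det := by rw [nonsing_inv_mul_cancel_right _ _ hσz]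

theorem exists_isUnit_fixed_det_transpose_mul_mul_eq (j : Matrix m m R) (hz : IsUnit z) {τ : R}
    (hτ_unit : IsUnit τ) (hτ : (z * (z.map σ)⁻¹).det * σ τ = τ) :
    ∃ c, σ c = c ∧ IsUnit c ∧ (zᵀ * j * z).det = τ * τ * j.det * (c * c) := by
  have hdet_unit : IsUnit z.det := (isUnit_iff_isUnit_det z).1 hz
  obtain ⟨c, hc⟩ : τ ∣ z.det := hτ_unit.dvd
  have hτc := det_mul_inv_map_mul_map_det σ hz
  refine ⟨c, map_eq_self_of_mul_map_eq_self hτ_unit.isRegular.left hτ (hc ▸ hτc),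
    isUnit_of_mul_isUnit_right (hc ▸ hdet_unit), ?_⟩
  rw [det_transpose_mul_mul_self, hc]
  ring

theorem stmt_14_general (j : Matrix m m R) (hz : IsUnit z) {ι : R} (hι : IsUnit ι)
    (hσι : σ ι = -ι) {x : Matrix m m R} (hxz : x = z * (z.map σ)⁻¹) :
    (x.det = 1 → ∃ c, σ c = c ∧ IsUnit c ∧ (zᵀ * j * z).det = j.det * (c * c)) ∧
      (x.det = -1 →
        ∃ c, σ c = c ∧ IsUnit c ∧ (zᵀ * j * z).det = ι * ι * j.det * (c * c)) := by
  subst hxz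
  constructor
  · intro hdet
    simpa only [one_mul] using
      exists_isUnit_fixed_det_transpose_mul_mul_eq σ j hz isUnit_one (by simp [hdet])
  · intro hdet
    exact exists_isUnit_fixed_det_transpose_mul_mul_eq σ j hz hι (by simp [hdet, hσι])

end CommRing

/-- In the orthogonal case, let `x ∈ X^j` and let `z ∈ GL_n(E)` satisfy
`x = z·σ(z)⁻¹`, and set `y = zᵀ j z`.  Then `det y ∈ det j · F^{×2}` if `det x = 1`, and
`det y ∈ ι²·det j·F^{×2}` if `det x = -1`.  (`F` is the fixed field of `σ`, and
`ι ∈ E \ F` satisfies `ι² ∈ F`.) -/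
theorem stmt_14 (p : ℕ) [Fact p.Prime]
    (E : Type) [Field E] [Algebra ℚ_[p] E] [FiniteDimensional ℚ_[p] E]
    (σ : E ≃ₐ[ℚ_[p]] E) (hσ1 : σ ≠ 1) (hσ2 : σ * σ = 1)
    (ι : E) (hι1 : σ ι ≠ ι) (hι2 : σ (ι * ι) = ι * ι)
    (n : ℕ) (hn : 1 ≤ n)
    (j : Matrix (Fin n) (Fin n) E)
    (hjF : ∀ a b, σ (j a b) = j a b) (hjU : IsUnit j) (hjsym : jᵀ = j)
    (x z : Matrix (Fin n) (Fin n) E)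
    (hx : Xj ⇑σ j x) (hz : IsUnit z) (hxz : x = z * (z.map ⇑σ)⁻¹) :
    ((x.det = 1 → ∃ c, σ c = c ∧ c ≠ 0 ∧ (zᵀ * j * z).det = j.det * (c * c)) ∧
     (x.det = -1 → ∃ c, σ c = c ∧ c ≠ 0 ∧ (zᵀ * j * z).det = ι * ι * j.det * (c * c))) := by
  have hι : ι ≠ 0 := fun h => hι1 (by rw [h, map_zero])
  simpa only [isUnit_iff_ne_zero, RingHom.coe_coe] using
    stmt_14_general (σ : E →+* E) j hz hι.isUnit (map_eq_neg_of_map_mul_self_eq hι1 hι2) hxz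
end

section
/- Let F be a non-archimedean local field of characteristic zero, E = F[ı] a quadratic extension with ı ∈ E \ F and ı² ∈ F, and let u ∈ F^× \ N_{E/F}(E^×). Set y₁ = diag(1, 1, -1) and y₂ = diag(ı², u, -ı²·u), both in GL_3(F). Then there is no g ∈ GL_3(F) with transpose(g)·y₁·g = y₂, but there exists z ∈ GL_3(E) with transpose(z)·y₁·z = y₂, and any such z automatically satisfies det z ∈ F^×. -/
open Matrix

/-! The form `y₁` is isotropic over `F`, with isotropic vector `(1, 0, 1)`, whereas `y₂` is
anisotropic over `F`: writing `N e = e * σ e`, the relation `ι²a² + ub² - ι²uc² = 0` with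
`a, b, c ∈ F` says `u * N (b + ιc) = N (ιa)`, and `u` is not a norm. Over `E` the entry `ι²`
becomes a square, and the hyperbolic plane `⟨1, -1⟩` represents every `u`, hence is congruent to
`⟨u, -u⟩`. Taking determinants in `zᵀ * y₁ * z = y₂` gives `(det z)² = (ι²u)²`.
-/

section Congruence

variable {n R : Type*} [Fintype n] [CommRing R]

theorem dotProduct_transpose_mul_mul_mulVec (A g : Matrix n n R) (v w : n → R) :
    v ⬝ᵥ (gᵀ * A * g) *ᵥ w = (g *ᵥ v) ⬝ᵥ A *ᵥ (g *ᵥ w) := by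
  rw [← mulVec_mulVec, ← mulVec_mulVec, dotProduct_mulVec, vecMul_transpose]

variable [DecidableEq n]

theorem isUnit_of_isUnit_transpose_mul_mul {A g : Matrix n n R} (h : IsUnit (gᵀ * A * g)) :
    IsUnit g := by
  rw [isUnit_iff_isUnit_det, det_mul] at h
  exact g.isUnit_iff_isUnit_det.mpr (isUnit_of_mul_isUnit_right h)

theorem det_eq_or_eq_neg_of_transpose_mul_mul_eq [IsDomain R] {A B g : Matrix n n R} {d : R}
    (hA : A.det ≠ 0) (hB : B.det = A.det * (d * d)) (h : gᵀ * A * g = B) :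
    g.det = d ∨ g.det = -d := by
  have hdet : A.det * (g.det * g.det) = A.det * (d * d) := by
    rw [← hB, ← h, det_mul, det_mul, det_transpose]
    ring
  exact mul_self_eq_mul_self_iff.mp (mul_left_cancel₀ hA hdet)

theorem fixed_of_fixed_mulVec (σ : R →+* R) {g : Matrix n n R} (hg : IsUnit g)
    (hgσ : ∀ i j, σ (g i j) = g i j) {v : n → R} (hv : ∀ i, σ ((g *ᵥ v) i) = (g *ᵥ v) i) (i : n) :
    σ (v i) = v i := by
  have hmap : g.map σ = g := Matrix.ext hgσ
  have hmulVec : g *ᵥ (σ ∘ v) = g *ᵥ v := by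
    ext j
    rw [← hv j, RingHom.map_mulVec, hmap]
  exact congrFun (mulVec_injective_of_isUnit hg hmulVec) i

theorem exists_fixed_isotropic_of_fixed_congruence (σ : R →+* R) {A g : Matrix n n R}
    (hg : IsUnit g) (hgσ : ∀ i j, σ (g i j) = g i j) {w : n → R} (hw : w ≠ 0)
    (hwσ : ∀ i, σ (w i) = w i) (hAw : w ⬝ᵥ A *ᵥ w = 0) :
    ∃ v ≠ 0, (∀ i, σ (v i) = v i) ∧ v ⬝ᵥ (gᵀ * A * g) *ᵥ v = 0 := by
  obtain ⟨v, rfl⟩ := mulVec_surjective_iff_isUnit.mpr hg w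
  refine ⟨v, ?_, fixed_of_fixed_mulVec σ hg hgσ hwσ, ?_⟩
  · rintro rfl
    exact hw (mulVec_zero g)
  · rwa [dotProduct_transpose_mul_mul_mulVec]

end Congruence

-- The block `!![b, c; c, b]` is multiplication by `b + cj` on `R[j]`, `j² = 1`, so it scales the
-- norm form `⟨1, -1⟩` of `R[j]` by the norm `b² - c²`.
theorem transpose_mul_diagonal_one_one_neg_one_mul {R : Type*} [CommRing R] (a b c : R) :
    (!![a, 0, 0; 0, b, a * c; 0, c, a * b])ᵀ * diagonal ![1, 1, -1] *
        !![a, 0, 0; 0, b, a * c; 0, c, a * b] =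
      diagonal ![a * a, b * b - c * c, -(a * a * (b * b - c * c))] := by
  ext i j
  fin_cases i <;> fin_cases j <;>
    simp [mul_apply, Fin.sum_univ_three, diagonal_apply] <;> ring

theorem exists_transpose_mul_diagonal_one_one_neg_one_mul_eq {K : Type*} [Field K]
    (h2 : (2 : K) ≠ 0) (a u : K) :
    ∃ z : Matrix (Fin 3) (Fin 3) K,
      zᵀ * diagonal ![1, 1, -1] * z = diagonal ![a * a, u, -(a * a * u)] := by
  have hu : (u + 1) / 2 * ((u + 1) / 2) - (u - 1) / 2 * ((u - 1) / 2) = u := by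
    field_simp
    ring
  exact ⟨_, by simpa only [hu] using
    transpose_mul_diagonal_one_one_neg_one_mul a ((u + 1) / 2) ((u - 1) / 2)⟩

section FixedPoints

theorem eq_zero_and_eq_zero_of_add_mul_eq_zero {R : Type*} [CommRing R] [IsDomain R]
    {σ : R →+* R} {ι b c : R} (hι : σ ι ≠ ι) (hb : σ b = b) (hc : σ c = c) (h : b + ι * c = 0) :
    b = 0 ∧ c = 0 := by
  have hσ : b + σ ι * c = 0 := by simpa only [map_add, map_mul, map_zero, hb, hc] using congrArg σ h
  have hmul : (σ ι - ι) * c = 0 := by linear_combination hσ - h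
  have hc0 : c = 0 := (mul_eq_zero.mp hmul).resolve_left (sub_ne_zero.mpr hι)
  exact ⟨by simpa only [hc0, mul_zero, add_zero] using h, hc0⟩

variable {K : Type*} [Field K] {σ : K →+* K} {ι u : K}

theorem eq_zero_of_mul_norm_eq_norm (hu : ¬∃ e, u = e * σ e) {w x : K}
    (h : u * (w * σ w) = x * σ x) : w = 0 := by
  by_contra hw
  have hσw : σ w ≠ 0 := (map_ne_zero σ).mpr hw
  refine hu ⟨x / w, ?_⟩
  rw [map_div₀, div_mul_div_comm, ← h, mul_div_cancel_right₀ u (mul_ne_zero hw hσw)]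

theorem eq_zero_of_fixed_of_dotProduct_diagonal_mulVec_eq_zero (hι : σ ι ≠ ι) (hσι : σ ι = -ι)
    (hu : ¬∃ e, u = e * σ e) {v : Fin 3 → K} (hv : ∀ i, σ (v i) = v i)
    (h : v ⬝ᵥ diagonal ![ι * ι, u, -(ι * ι * u)] *ᵥ v = 0) : v = 0 := by
  have hform : ι * ι * (v 0 * v 0) + u * (v 1 * v 1) - ι * ι * u * (v 2 * v 2) = 0 := by
    simp only [dotProduct, mulVec_diagonal, Fin.sum_univ_three, cons_val] at h
    linear_combination h
  have hnorm : u * ((v 1 + ι * v 2) * σ (v 1 + ι * v 2)) = ι * v 0 * σ (ι * v 0) := by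
    simp only [map_add, map_mul, hv, hσι]
    linear_combination hform
  obtain ⟨hv1, hv2⟩ := eq_zero_and_eq_zero_of_add_mul_eq_zero hι (hv 1) (hv 2)
    (eq_zero_of_mul_norm_eq_norm hu hnorm)
  have hι0 : ι ≠ 0 := fun h ↦ hι (by rw [h, map_zero])
  have hv0 : v 0 = 0 := by simpa [hv1, hv2, hι0] using hform
  ext i
  fin_cases i <;> assumption

theorem not_exists_fixed_congruence (hι : σ ι ≠ ι) (hσι : σ ι = -ι) (hu : ¬∃ e, u = e * σ e) :
    ¬∃ g : Matrix (Fin 3) (Fin 3) K, IsUnit g ∧ (∀ i j, σ (g i j) = g i j) ∧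
      gᵀ * diagonal ![1, 1, -1] * g = diagonal ![ι * ι, u, -(ι * ι * u)] := by
  rintro ⟨g, hg, hgσ, hgy⟩
  have hw : (![1, 0, 1] : Fin 3 → K) ≠ 0 := fun h ↦ one_ne_zero (congrFun h 0)
  have hwσ : ∀ i, σ (![1, 0, 1] i) = ![1, 0, 1] i := by
    intro i
    fin_cases i <;> simp
  have hiso : ![1, 0, 1] ⬝ᵥ diagonal ![1, 1, -1] *ᵥ ![1, 0, 1] = (0 : K) := by
    simp [mulVec_diagonal, dotProduct, Fin.sum_univ_three]
  obtain ⟨v, hv0, hvσ, hv⟩ := exists_fixed_isotropic_of_fixed_congruence σ hg hgσ hw hwσ hiso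
  rw [hgy] at hv
  exact hv0 (eq_zero_of_fixed_of_dotProduct_diagonal_mulVec_eq_zero hι hσι hu hvσ hv)

end FixedPoints

theorem stmt_15_general {K : Type*} [Field K] (σ : K →+* K) {ι u : K} (hι : σ ι ≠ ι)
    (hι2 : σ (ι * ι) = ι * ι) (huσ : σ u = u) (hu : ¬∃ e, u = e * σ e)
    {y₁ y₂ : Matrix (Fin 3) (Fin 3) K} (hy₁ : y₁ = diagonal ![1, 1, -1])
    (hy₂ : y₂ = diagonal ![ι * ι, u, -(ι * ι * u)]) :
    (¬∃ g : Matrix (Fin 3) (Fin 3) K, IsUnit g ∧ (∀ i j, σ (g i j) = g i j) ∧ gᵀ * y₁ * g = y₂) ∧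
    (∃ z : Matrix (Fin 3) (Fin 3) K, IsUnit z ∧ zᵀ * y₁ * z = y₂) ∧
    (∀ z : Matrix (Fin 3) (Fin 3) K, IsUnit z → zᵀ * y₁ * z = y₂ →
      σ z.det = z.det ∧ z.det ≠ 0) := by
  have hσι : σ ι = -ι := (mul_self_eq_mul_self_iff.mp (map_mul σ ι ι ▸ hι2)).resolve_left hι
  have hdet₁ : y₁.det = -1 := by simp [hy₁, Fin.prod_univ_three]
  have hdet₂ : y₂.det = y₁.det * (ι * ι * u * (ι * ι * u)) := by
    simp [hdet₁, hy₂, Fin.prod_univ_three]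
  have hι0 : ι ≠ 0 := fun h ↦ hι (by rw [h, map_zero])
  have hu0 : u ≠ 0 := fun h ↦ hu ⟨0, by rw [h, zero_mul]⟩
  -- In characteristic two, `σ ι = -ι` would say that `σ` fixes `ι`.
  have h2 : (2 : K) ≠ 0 := fun h ↦ hι (by linear_combination hσι - ι * h)
  refine ⟨?_, ?_, fun z hz hzy ↦ ⟨?_, (z.isUnit_iff_isUnit_det.mp hz).ne_zero⟩⟩
  · simpa only [hy₁, hy₂] using not_exists_fixed_congruence hι hσι hu
  · obtain ⟨z, hz⟩ := exists_transpose_mul_diagonal_one_one_neg_one_mul_eq h2 ι u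
    rw [← hy₁, ← hy₂] at hz
    have hy₂_unit : IsUnit y₂ := by
      simp [isUnit_iff_isUnit_det, hdet₂, hdet₁, hι0, hu0]
    exact ⟨z, isUnit_of_isUnit_transpose_mul_mul (hz ▸ hy₂_unit), hz⟩
  · rcases det_eq_or_eq_neg_of_transpose_mul_mul_eq (by simp [hdet₁]) hdet₂ hzy with h | h <;>
      simp [h, hσι, huσ]

/-- Let `F` be a non-archimedean local field of characteristic zero,
`E = F[ι]` a quadratic extension with `ι ∈ E \ F` and `ι² ∈ F`, and let
`u ∈ F^× \ N_{E/F}(E^×)`.  Set `y₁ = diag(1,1,-1)` and `y₂ = diag(ι², u, -ι²·u)` in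
`GL₃(F)`.  Then there is no `g ∈ GL₃(F)` with `gᵀ·y₁·g = y₂`, but there exists
`z ∈ GL₃(E)` with `zᵀ·y₁·z = y₂`, and any such `z` automatically satisfies
`det z ∈ F^×`.  (`F` is realized as the fixed field of the Galois involution `σ` of
`E/F`; the norm is `N_{E/F}(e) = e·σ(e)`.) -/
theorem stmt_15 (p : ℕ) [Fact p.Prime]
    (E : Type) [Field E] [Algebra ℚ_[p] E] [FiniteDimensional ℚ_[p] E]
    (σ : E ≃ₐ[ℚ_[p]] E) (hσ1 : σ ≠ 1) (hσ2 : σ * σ = 1)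
    (ι : E) (hι1 : σ ι ≠ ι) (hι2 : σ (ι * ι) = ι * ι)
    (u : E) (huF : σ u = u) (hu0 : u ≠ 0) (hu : ¬ ∃ e : E, u = e * σ e)
    (y₁ y₂ : Matrix (Fin 3) (Fin 3) E)
    (hy₁ : y₁ = Matrix.diagonal ![1, 1, -1])
    (hy₂ : y₂ = Matrix.diagonal ![ι * ι, u, -(ι * ι * u)]) :
    -- no g ∈ GL₃(F) with gᵀ y₁ g = y₂
    (¬ ∃ g : Matrix (Fin 3) (Fin 3) E,
        IsUnit g ∧ (∀ a b, σ (g a b) = g a b) ∧ gᵀ * y₁ * g = y₂) ∧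
    -- there exists z ∈ GL₃(E) with zᵀ y₁ z = y₂
    (∃ z : Matrix (Fin 3) (Fin 3) E, IsUnit z ∧ zᵀ * y₁ * z = y₂) ∧
    -- and any such z has determinant in F^×
    (∀ z : Matrix (Fin 3) (Fin 3) E, IsUnit z → zᵀ * y₁ * z = y₂ →
      σ z.det = z.det ∧ z.det ≠ 0) := by
  exact stmt_15_general (σ : E →+* E) hι1 hι2 huF hu hy₁ hy₂
end
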